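/- arXiv:2508.12468 — 2 statements merged into one kernel-verified Lean document; each statement's English description precedes it below -/
import Mathlib

section
/- For every complex number q with 0 < |q| < 1, one has ∑_{i,j,k,l ≥ 0} q^{2i²+2j²+2k²+2l²−2il−2jl−2kl−2k+l} / ((q⁴;q⁴)_i (q⁴;q⁴)_j (q⁴;q⁴)_k (q⁴;q⁴)_l) = 2 J_4³ J_12² / (J_2³ J_8 J_24) + 4q · J_6 J_8 J_24 / (J_2² J_12). (This is the paper's identity F(1, 1, q^{−1}, q^{1/2}; q²) = 2 J_2³ J_6²/(J_1³ J_4 J_12) + 4q^{1/2} J_3 J_4 J_12/(J_1² J_6), with q replaced by q² throughout to clear half-integer exponents.) -/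
open scoped BigOperators

/-- The infinite q-Pochhammer symbol `(a; q)_∞ = ∏_{k=0}^∞ (1 - a q^k)`. -/
noncomputable def qPochInf (a q : ℂ) : ℂ := ∏' n : ℕ, (1 - a * q ^ n)

/-- The finite q-Pochhammer symbol `(a; q)_n = ∏_{k=0}^{n-1} (1 - a q^k)`. -/
noncomputable def qPoch (a q : ℂ) (n : ℕ) : ℂ :=
  Finset.prod (Finset.range n) (fun k => 1 - a * q ^ k)

/-- `J_m = (q^m; q^m)_∞`. -/
noncomputable def J (q : ℂ) (m : ℕ) : ℂ := qPochInf (q ^ m) (q ^ m)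

/-- `J_{a,m} = (q^a; q^m)_∞ (q^{m-a}; q^m)_∞ (q^m; q^m)_∞`. -/
noncomputable def Jam (q : ℂ) (a m : ℕ) : ℂ :=
  qPochInf (q ^ a) (q ^ m) * qPochInf (q ^ (m - a)) (q ^ m) * qPochInf (q ^ m) (q ^ m)

open Filter Topology

section basics

lemma qs_summable (a : ℂ) {Q : ℂ} (hQ : ‖Q‖ < 1) : Summable (fun n : ℕ => ‖-(a * Q ^ n)‖) := by
  simp only [norm_neg, norm_mul, norm_pow]
  exact (summable_geometric_of_lt_one (norm_nonneg _) hQ).mul_left _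

lemma qs_multipliable (a : ℂ) {Q : ℂ} (hQ : ‖Q‖ < 1) :
    Multipliable (fun n : ℕ => 1 - a * Q ^ n) := by
  have := multipliable_one_add_of_summable (qs_summable a hQ)
  simpa [sub_eq_add_neg] using this

lemma qs_ne_zero (a : ℂ) {Q : ℂ} (hQ : ‖Q‖ < 1) (h : ∀ n : ℕ, 1 - a * Q ^ n ≠ 0) :
    qPochInf a Q ≠ 0 := by
  have := tprod_one_add_ne_zero_of_summable (f := fun n : ℕ => -(a * Q ^ n))
    (by simpa [sub_eq_add_neg] using h) (qs_summable a hQ)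
  simpa [sub_eq_add_neg, qPochInf] using this

lemma qs_tendsto (a : ℂ) {Q : ℂ} (hQ : ‖Q‖ < 1) :
    Tendsto (fun n => qPoch a Q n) atTop (𝓝 (qPochInf a Q)) :=
  (qs_multipliable a hQ).tendsto_prod_tprod_nat

lemma qPoch_zero (a Q : ℂ) : qPoch a Q 0 = 1 := by simp [qPoch]

lemma qPoch_succ (a Q : ℂ) (n : ℕ) : qPoch a Q (n+1) = qPoch a Q n * (1 - a * Q^n) := by
  simp [qPoch, Finset.prod_range_succ]

lemma qPoch_add (a Q : ℂ) (m n : ℕ) :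
    qPoch a Q (m+n) = qPoch a Q m * qPoch (a * Q^m) Q n := by
  simp only [qPoch, Finset.prod_range_add]
  congr 1
  apply Finset.prod_congr rfl
  intro k _
  ring

lemma qPochInf_split (a : ℂ) {Q : ℂ} (hQ : ‖Q‖ < 1) (n : ℕ) :
    qPochInf a Q = qPoch a Q n * qPochInf (a * Q^n) Q := by
  have h1 := (qs_tendsto a hQ).comp (tendsto_add_atTop_nat n)
  have h2 := (qs_tendsto (a * Q^n) hQ).const_mul (qPoch a Q n)
  refine tendsto_nhds_unique h1 (h2.congr ?_)
  intro k
  simp only [Function.comp]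
  rw [add_comm, qPoch_add]

lemma one_sub_pow_ne {a Q : ℂ} (ha : ‖a‖ < 1) (hQ : ‖Q‖ < 1) (n : ℕ) : 1 - a * Q ^ n ≠ 0 := by
  intro h
  have h2 : ‖a * Q^n‖ < 1 := by
    rw [norm_mul, norm_pow]
    calc ‖a‖ * ‖Q‖^n ≤ ‖a‖ * 1 := by
          gcongr
          exact pow_le_one₀ (norm_nonneg _) hQ.le
      _ < 1 := by simpa using ha
  rw [← sub_eq_zero.mp h] at h2
  simp at h2

lemma qPoch_ne_zero {a Q : ℂ} (ha : ‖a‖ < 1) (hQ : ‖Q‖ < 1) (n : ℕ) : qPoch a Q n ≠ 0 :=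
  Finset.prod_ne_zero_iff.mpr fun k _ => one_sub_pow_ne ha hQ k

lemma qPochInf_ne_zero {a Q : ℂ} (ha : ‖a‖ < 1) (hQ : ‖Q‖ < 1) : qPochInf a Q ≠ 0 :=
  qs_ne_zero a hQ (one_sub_pow_ne ha hQ)

lemma qPoch_bdd (a : ℂ) {Q : ℂ} (hQ : ‖Q‖ < 1) : ∃ C : ℝ, 0 < C ∧ ∀ n, ‖qPoch a Q n‖ ≤ C := by
  obtain ⟨C, hC⟩ := (Metric.isBounded_range_of_tendsto _ (qs_tendsto a hQ)).exists_norm_le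
  exact ⟨max C 1, by positivity, fun n => (hC _ ⟨n, rfl⟩).trans (le_max_left _ _)⟩

lemma qPoch_inv_bdd {Q : ℂ} (hQ : ‖Q‖ < 1) :
    ∃ C : ℝ, 0 < C ∧ ∀ n, ‖(qPoch Q Q n)⁻¹‖ ≤ C := by
  obtain ⟨C, hC⟩ := (Metric.isBounded_range_of_tendsto _
    ((qs_tendsto Q hQ).inv₀ (qPochInf_ne_zero hQ hQ))).exists_norm_le
  exact ⟨max C 1, by positivity, fun n => (hC _ ⟨n, rfl⟩).trans (le_max_left _ _)⟩

lemma qPoch_mul (a Q : ℂ) (n : ℕ) : qPoch a Q n * qPoch (-a) Q n = qPoch (a^2) (Q^2) n := by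
  simp only [qPoch, ← Finset.prod_mul_distrib]
  apply Finset.prod_congr rfl
  intro k _
  ring

lemma norm_pow_lt {Q : ℂ} (hQ : ‖Q‖ < 1) {n : ℕ} (hn : n ≠ 0) : ‖Q^n‖ < 1 := by
  rw [norm_pow]; exact pow_lt_one₀ (norm_nonneg _) hQ hn

lemma qPochInf_mul (a : ℂ) {Q : ℂ} (hQ : ‖Q‖ < 1) :
    qPochInf a Q * qPochInf (-a) Q = qPochInf (a^2) (Q^2) := by
  refine tendsto_nhds_unique ((qs_tendsto a hQ).mul (qs_tendsto (-a) hQ)) ?_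
  simp only [qPoch_mul]
  exact qs_tendsto _ (norm_pow_lt hQ two_ne_zero)

lemma qPoch_even (a Q : ℂ) (n : ℕ) :
    qPoch a Q (2*n) = qPoch a (Q^2) n * qPoch (a*Q) (Q^2) n := by
  induction n with
  | zero => simp [qPoch]
  | succ n ih =>
    rw [show 2*(n+1) = 2*n+1+1 by ring, qPoch_succ, qPoch_succ, qPoch_succ, qPoch_succ, ih]
    ring

lemma qPochInf_two (a : ℂ) {Q : ℂ} (hQ : ‖Q‖ < 1) :
    qPochInf a Q = qPochInf a (Q^2) * qPochInf (a*Q) (Q^2) := by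
  have h1 := (qs_tendsto a hQ).comp (tendsto_id.const_mul_atTop' (two_pos : 0 < 2))
  refine tendsto_nhds_unique h1 ?_
  have h2 := norm_pow_lt hQ two_ne_zero
  refine ((qs_tendsto a h2).mul (qs_tendsto (a*Q) h2)).congr ?_
  intro n
  exact (qPoch_even a Q n).symm

lemma qPoch_three (a Q : ℂ) (n : ℕ) :
    qPoch a Q (3*n) = qPoch a (Q^3) n * qPoch (a*Q) (Q^3) n * qPoch (a*Q^2) (Q^3) n := by
  induction n with
  | zero => simp [qPoch]
  | succ n ih =>
    rw [show 3*(n+1) = 3*n+1+1+1 by ring, qPoch_succ, qPoch_succ, qPoch_succ, qPoch_succ,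
      qPoch_succ, qPoch_succ, ih]
    ring

lemma qPochInf_three (a : ℂ) {Q : ℂ} (hQ : ‖Q‖ < 1) :
    qPochInf a Q = qPochInf a (Q^3) * qPochInf (a*Q) (Q^3) * qPochInf (a*Q^2) (Q^3) := by
  have h1 := (qs_tendsto a hQ).comp (tendsto_id.const_mul_atTop' (three_pos : 0 < 3))
  refine tendsto_nhds_unique h1 ?_
  have h2 := norm_pow_lt hQ three_ne_zero
  refine (((qs_tendsto a h2).mul (qs_tendsto (a*Q) h2)).mul (qs_tendsto (a*Q^2) h2)).congr ?_
  intro n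
  exact (qPoch_three a Q n).symm

end basics

section finite

/-- antidiagonal step: if `g` satisfies boundary vanishing -/
lemma antidiag_step (N : ℕ) (Q : ℂ) (hne : ∀ n, qPoch Q Q n ≠ 0) (f g : ℕ → ℕ → ℂ)  :
    ∑ p ∈ Finset.HasAntidiagonal.antidiagonal (N+1),
      (f p.1 p.2 * (1 - Q^p.1) + g p.1 p.2 * (1 - Q^p.2)) / (qPoch Q Q p.1 * qPoch Q Q p.2)
    = ∑ p ∈ Finset.HasAntidiagonal.antidiagonal N,
      (f (p.1+1) p.2 + g p.1 (p.2+1)) / (qPoch Q Q p.1 * qPoch Q Q p.2) := by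
  simp only [add_div, Finset.sum_add_distrib]
  congr 1
  · rw [Finset.Nat.sum_antidiagonal_succ]
    simp only [pow_zero, sub_self, mul_zero, zero_div, zero_add]
    apply Finset.sum_congr rfl
    intro p _
    have h := hne (p.1+1)
    rw [qPoch_succ, ← pow_succ'] at *
    have := hne p.1
    have := hne p.2
    have := right_ne_zero_of_mul h
    field_simp
  · rw [Finset.Nat.sum_antidiagonal_succ']
    simp only [pow_zero, sub_self, mul_zero, zero_div, zero_add]
    apply Finset.sum_congr rfl
    intro p _
    have h := hne (p.2+1)
    rw [qPoch_succ, ← pow_succ'] at *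
    have := hne p.1
    have := hne p.2
    have := right_ne_zero_of_mul h
    field_simp

lemma qPoch_inv_succ {Q : ℂ} {N : ℕ} (hne : ∀ n, qPoch Q Q n ≠ 0) :
    (1 - Q^(N+1)) * (qPoch Q Q (N+1))⁻¹ = (qPoch Q Q N)⁻¹ ∧ 1 - Q^(N+1) ≠ 0 := by
  have h := hne (N+1)
  rw [qPoch_succ, ← pow_succ'] at *
  have := hne N
  have := right_ne_zero_of_mul h
  refine ⟨?_, this⟩
  field_simp

/-- q-Chu-Vandermonde -/
lemma fin_vand (a : ℂ) {Q : ℂ} (hne : ∀ n, qPoch Q Q n ≠ 0) (N : ℕ) :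
    ∑ p ∈ Finset.HasAntidiagonal.antidiagonal N,
      (qPoch a Q p.1 * a^p.2) / (qPoch Q Q p.1 * qPoch Q Q p.2) = (qPoch Q Q N)⁻¹ := by
  induction N with
  | zero => simp [qPoch]
  | succ N ih =>
    obtain ⟨h1, h2⟩ := qPoch_inv_succ (N := N) hne
    apply mul_left_cancel₀ h2
    rw [h1, ← ih, Finset.mul_sum]
    have := antidiag_step N Q hne (fun s t => qPoch a Q s * a^t)
      (fun s t => Q^s * (qPoch a Q s * a^t))
    calc _ = _ := Finset.sum_congr rfl ?_
      _ = _ := this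
      _ = _ := Finset.sum_congr rfl ?_
    · intro p hp
      rw [← Finset.HasAntidiagonal.mem_antidiagonal.mp hp, pow_add]
      ring
    · intro p hp
      simp only [qPoch_succ]
      ring

/-- finite Euler -/
lemma fin_euler (Y z : ℂ) (hne : ∀ n, qPoch (Y^2) (Y^2) n ≠ 0) (N : ℕ) :
    ∑ p ∈ Finset.HasAntidiagonal.antidiagonal N,
      (Y^(p.1^2) * z^p.1) / (qPoch (Y^2) (Y^2) p.1 * qPoch (Y^2) (Y^2) p.2)
      = qPoch (-(z*Y)) (Y^2) N * (qPoch (Y^2) (Y^2) N)⁻¹ := by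
  induction N with
  | zero => simp [qPoch]
  | succ N ih =>
    obtain ⟨h1, h2⟩ := qPoch_inv_succ (N := N) hne
    apply mul_left_cancel₀ h2
    rw [mul_left_comm, h1, qPoch_succ, mul_right_comm, ← ih, Finset.mul_sum, Finset.sum_mul]
    have := antidiag_step N (Y^2) hne (fun s t => (Y^2)^t * (Y^(s^2) * z^s))
      (fun s t => (Y^(s^2) * z^s))
    calc _ = _ := Finset.sum_congr rfl ?_
      _ = _ := this
      _ = _ := Finset.sum_congr rfl ?_
    · intro p hp
      rw [← Finset.HasAntidiagonal.mem_antidiagonal.mp hp, pow_add]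
      ring
    · intro p hp
      rw [← Finset.HasAntidiagonal.mem_antidiagonal.mp hp]
      ring

/-- Rogers-Szego -/
lemma fin_rs (w : ℂ) (hw : w ≠ 0) (hne : ∀ n, qPoch (w^4) (w^4) n ≠ 0)
    (hne' : ∀ n, qPoch (w^2) (w^2) n ≠ 0) (N : ℕ) :
    ∑ p ∈ Finset.HasAntidiagonal.antidiagonal N,
      (w^(((p.2:ℤ)-p.1)*((p.2:ℤ)-p.1+1))) / (qPoch (w^4) (w^4) p.1 * qPoch (w^4) (w^4) p.2)
      = (qPoch (w^2) (w^2) N)⁻¹ := by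
  induction N with
  | zero => simp [qPoch]
  | succ N ih =>
    obtain ⟨h1, h2⟩ := qPoch_inv_succ (N := N) hne'
    obtain ⟨h1', h2'⟩ := qPoch_inv_succ (N := N) hne
    have h3 : 1 - (w^4)^(N+1) = (1 - (w^2)^(N+1)) * (1 + (w^2)^(N+1)) := by ring
    apply mul_left_cancel₀ h2'
    nth_rewrite 2 [h3]
    rw [mul_right_comm, h1, ← ih, Finset.mul_sum]
    have := antidiag_step N (w^4) hne
      (fun s t => w^(((t:ℤ)-s)*((t:ℤ)-s+1)))
      (fun s t => (w^4)^s * w^(((t:ℤ)-s)*((t:ℤ)-s+1)))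
    calc _ = _ := Finset.sum_congr rfl ?_
      _ = _ := this
      _ = (∑ p ∈ Finset.HasAntidiagonal.antidiagonal N,
        (w^(((p.1:ℤ)-p.2)*((p.1:ℤ)-p.2+1))) / (qPoch (w^4) (w^4) p.2 * qPoch (w^4) (w^4) p.1)) +
        ∑ p ∈ Finset.HasAntidiagonal.antidiagonal N, (w^2)^(N+1) *
         ((w^(((p.2:ℤ)-p.1)*((p.2:ℤ)-p.1+1))) / (qPoch (w^4) (w^4) p.1 * qPoch (w^4) (w^4) p.2)) := by
          rw [← Finset.sum_add_distrib]
          apply Finset.sum_congr rfl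
          intro p hp
          have e1 : w^(((p.2:ℤ)-(p.1+1:ℕ))*((p.2:ℤ)-(p.1+1:ℕ)+1))
            = w^(((p.1:ℤ)-p.2)*((p.1:ℤ)-p.2+1)) := by
              congr 1; push_cast; ring
          have e2 : (w^4)^p.1 * w^((((p.2+1:ℕ):ℤ)-p.1)*(((p.2+1:ℕ):ℤ)-p.1+1))
            = (w^2)^(N+1) * w^(((p.2:ℤ)-p.1)*((p.2:ℤ)-p.1+1)) := by
              rw [← Finset.HasAntidiagonal.mem_antidiagonal.mp hp]
              simp only [← zpow_natCast, ← zpow_mul, ← zpow_add₀ hw]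
              congr 1; push_cast; ring
          rw [e1, e2, add_div, mul_comm (qPoch (w^4) (w^4) p.1)]
          ring
      _ = _ := ?_
    · intro p hp
      rw [← Finset.HasAntidiagonal.mem_antidiagonal.mp hp, pow_add]
      ring
    · rw [← Finset.mul_sum, mul_add, mul_one]
      congr 1
      · exact Finset.Nat.sum_antidiagonal_swap (n := N) (f := fun p : ℕ × ℕ =>
          (w^(((p.2:ℤ)-p.1)*((p.2:ℤ)-p.1+1))) / (qPoch (w^4) (w^4) p.1 * qPoch (w^4) (w^4) p.2))
      · ring

end finite
section analysis

lemma gauss_summable {r : ℝ} (c : ℝ) (h0 : 0 ≤ r) (h1 : r < 1) (hc : 0 ≤ c) :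
    Summable (fun n : ℕ => r^(n^2) * c^n) := by
  have ht : Tendsto (fun n : ℕ => r^n * c) atTop (𝓝 0) := by
    simpa using (tendsto_pow_atTop_nhds_zero_of_lt_one h0 h1).mul_const c
  have he : ∀ᶠ n : ℕ in atTop, r^n * c ≤ 1/2 := ht.eventually_le_const (by norm_num)
  refine summable_of_ratio_norm_eventually_le (r := 1/2) (by norm_num) ?_
  filter_upwards [he] with n hn
  rw [Real.norm_of_nonneg (by positivity), Real.norm_of_nonneg (by positivity)]
  calc r^((n+1)^2) * c^(n+1) = (r^(n+1) * (r^n * c)) * (r^(n^2) * c^n) := by ring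
    _ ≤ (1 * (1/2)) * (r^(n^2) * c^n) := by
      gcongr
      exact pow_le_one₀ h0 h1.le
    _ = _ := by ring

lemma gauss_summable_norm {Y : ℂ} (hY : ‖Y‖ < 1) (z : ℂ) :
    Summable (fun n : ℕ => ‖Y^(n^2) * z^n‖) := by
  simpa using gauss_summable ‖z‖ (norm_nonneg Y) hY (norm_nonneg z)

lemma gauss_summable_int {Y : ℂ} (hY : ‖Y‖ < 1) (z : ℂ) :
    Summable (fun n : ℤ => ‖Y^(n^2) * z^n‖) := by
  apply Summable.of_nat_of_neg
  · refine (gauss_summable_norm hY z).congr ?_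
    intro n
    congr 2 
  · refine (gauss_summable_norm hY z⁻¹).congr ?_
    intro n
    congr 2
    · rw [neg_sq]; rfl
    · simp

lemma euler_sum {Y : ℂ} (hY : ‖Y‖ < 1) (z : ℂ) :
    ∑' s : ℕ, Y^(s^2) * z^s / qPoch (Y^2) (Y^2) s = qPochInf (-(z*Y)) (Y^2) := by
  have hQ := norm_pow_lt hY two_ne_zero
  have hne := qPoch_ne_zero hQ hQ
  have hP := qPochInf_ne_zero hQ hQ
  obtain ⟨C, hC0, hC⟩ := qPoch_inv_bdd hQ
  let f : ℕ → ℕ → ℂ := fun n s => if s ≤ n then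
    Y^(s^2) * z^s / (qPoch (Y^2) (Y^2) s * qPoch (Y^2) (Y^2) (n-s)) else 0
  have key : Tendsto (fun n => ∑' s, f n s) atTop
      (𝓝 (∑' s, Y^(s^2) * z^s / (qPoch (Y^2) (Y^2) s * qPochInf (Y^2) (Y^2)))) := by
    refine tendsto_tsum_of_dominated_convergence (bound := fun s => ‖Y^(s^2) * z^s‖ * (C*C)) ?_ ?_ ?_
    · exact (gauss_summable_norm hY z).mul_right _
    · intro s
      have h1 : Tendsto (fun n => qPoch (Y^2) (Y^2) (n-s)) atTop (𝓝 (qPochInf (Y^2) (Y^2))) :=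
        (qs_tendsto _ hQ).comp (tendsto_sub_atTop_nat s)
      have h2 := (tendsto_const_nhds (x := Y^(s^2) * z^s)).div
        ((tendsto_const_nhds (x := qPoch (Y^2) (Y^2) s)).mul h1) (mul_ne_zero (hne s) hP)
      refine h2.congr' ?_
      filter_upwards [eventually_ge_atTop s] with n hn
      simp [f, hn]
    · refine Eventually.of_forall fun n s => ?_
      simp only [f]
      split_ifs
      · rw [div_eq_mul_inv, mul_inv, norm_mul, norm_mul (qPoch _ _ _)⁻¹]
        gcongr
        · exact hC s
        · exact hC _
      · simp only [norm_zero]; positivity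
  have h3 : ∀ n, ∑' s, f n s = qPoch (-(z*Y)) (Y^2) n * (qPoch (Y^2) (Y^2) n)⁻¹ := by
    intro n
    rw [← fin_euler Y z hne n, Finset.Nat.sum_antidiagonal_eq_sum_range_succ_mk,
      tsum_eq_sum (s := Finset.range n.succ)]
    · apply Finset.sum_congr rfl
      intro s hs
      have : s ≤ n := by simpa [Nat.lt_succ_iff] using hs
      simp [f, this]
    · intro s hs
      have : ¬ s ≤ n := by simpa [Nat.lt_succ_iff] using hs
      simp [f, this]
  simp only [h3] at key
  have h4 := tendsto_nhds_unique key
    ((qs_tendsto (-(z*Y)) hQ).mul ((qs_tendsto (Y^2) hQ).inv₀ hP))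
  simp only [div_mul_eq_div_div] at h4
  rw [tsum_div_const, div_eq_mul_inv] at h4
  exact mul_right_cancel₀ (inv_ne_zero hP) h4

lemma euler_summable {Y : ℂ} (hY : ‖Y‖ < 1) (z : ℂ) :
    Summable (fun s : ℕ => ‖Y^(s^2) * z^s / qPoch (Y^2) (Y^2) s‖) := by
  have hQ := norm_pow_lt hY two_ne_zero
  obtain ⟨C, hC0, hC⟩ := qPoch_inv_bdd hQ
  refine Summable.of_nonneg_of_le (fun _ => norm_nonneg _) (fun s => ?_)
    ((gauss_summable_norm hY z).mul_right C)
  rw [div_eq_mul_inv, norm_mul]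
  gcongr
  exact hC s

lemma tsum_antidiag {F : ℕ × ℕ → ℂ} (hF : Summable F) :
    ∑' p, F p = ∑' n, ∑ p ∈ Finset.HasAntidiagonal.antidiagonal n, F p := by
  rw [← Finset.HasAntidiagonal.sigmaAntidiagonalEquivProd.tsum_eq F]
  have h := Finset.HasAntidiagonal.sigmaAntidiagonalEquivProd.summable_iff.mpr hF
  refine (Summable.tsum_sigma' (fun n => (hasSum_fintype _).summable) h).trans ?_
  congr 1; ext n
  rw [tsum_fintype]
  exact Finset.sum_coe_sort _ F

lemma phi11 {Y : ℂ} (hY : ‖Y‖ < 1) (a β : ℂ) :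
    ∑' s : ℕ, qPoch a (Y^2) s * (Y^(s^2) * β^s) / qPoch (Y^2) (Y^2) s *
      qPochInf (-(a*β*Y) * (Y^2)^s) (Y^2) = qPochInf (-(β*Y)) (Y^2) := by
  have hQ := norm_pow_lt hY two_ne_zero
  have hne := qPoch_ne_zero hQ hQ
  obtain ⟨C, hC0, hC⟩ := qPoch_inv_bdd hQ
  obtain ⟨D, hD0, hD⟩ := qPoch_bdd a hQ
  let F : ℕ × ℕ → ℂ := fun p => Y^((p.1+p.2)^2) * β^(p.1+p.2) *
    ((qPoch a (Y^2) p.1 * a^p.2) / (qPoch (Y^2) (Y^2) p.1 * qPoch (Y^2) (Y^2) p.2))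
  have hF : Summable F := by
    have hb := (((gauss_summable_norm hY β).mul_of_nonneg (gauss_summable_norm hY (a*β))
      (fun _ => norm_nonneg _) (fun _ => norm_nonneg _))).mul_right (D*C*C)
    refine Summable.of_norm_bounded hb ?_
    rintro ⟨s, t⟩
    have e : F (s,t) = (Y^2)^(s*t) * ((Y^(s^2)*β^s) * (Y^(t^2)*(a*β)^t)) *
      (qPoch a (Y^2) s * (qPoch (Y^2) (Y^2) s)⁻¹ * (qPoch (Y^2) (Y^2) t)⁻¹) := by
        simp only [F, div_eq_mul_inv, mul_inv, mul_pow]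
        ring
    rw [e]
    simp only [norm_mul (_ * _) (_ * _ * _), norm_mul ((Y^2)^(s*t)), norm_mul (_ * (qPoch _ _ _)⁻¹),
      norm_mul (qPoch _ _ _), norm_mul (Y^(s^2)*β^s)]
    calc _ ≤ 1 * (‖Y^(s^2)*β^s‖ * ‖Y^(t^2)*(a*β)^t‖) * (D * C * C) := by
          gcongr
          · rw [norm_pow]; exact pow_le_one₀ (norm_nonneg _) hQ.le
          · exact hD s
          · exact hC s
          · exact hC t
      _ = _ := by rw [one_mul]
  have h1 := tsum_antidiag hF
  have h2 : ∀ n, ∑ p ∈ Finset.HasAntidiagonal.antidiagonal n, F p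
      = Y^(n^2) * β^n / qPoch (Y^2) (Y^2) n := by
    intro n
    rw [div_eq_mul_inv, ← fin_vand a hne n, Finset.mul_sum]
    apply Finset.sum_congr rfl
    intro p hp
    simp only [F]
    rw [Finset.HasAntidiagonal.mem_antidiagonal.mp hp]
  simp only [h2] at h1
  rw [euler_sum hY β] at h1
  rw [← h1, hF.tsum_prod]
  congr 1; ext s
  rw [show -(a*β*Y) * (Y^2)^s = -((a*β*(Y^2)^s) * Y) by ring, ← euler_sum hY, ← tsum_mul_left]
  congr 1; ext t
  have := hne s
  have := hne t
  simp only [F]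
  field_simp
  ring

end analysis
section bailey

noncomputable def qip (Q : ℂ) (m : ℤ) : ℂ := if 0 ≤ m then (qPoch Q Q m.toNat)⁻¹ else 0

lemma qip_nat (Q : ℂ) (m : ℕ) : qip Q m = (qPoch Q Q m)⁻¹ := by simp [qip]

lemma qip_neg (Q : ℂ) {m : ℤ} (h : m < 0) : qip Q m = 0 := by simp [qip, h]

lemma qip_bdd {Q : ℂ} (hQ : ‖Q‖ < 1) : ∃ C : ℝ, 0 < C ∧ ∀ m, ‖qip Q m‖ ≤ C := by
  obtain ⟨C, hC0, hC⟩ := qPoch_inv_bdd hQ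
  refine ⟨C, hC0, fun m => ?_⟩
  unfold qip
  split_ifs
  · exact hC _
  · simpa using hC0.le

lemma qip_tendsto {Q : ℂ} (hQ : ‖Q‖ < 1) (r : ℤ) :
    Tendsto (fun n : ℕ => qip Q (n + r)) atTop (𝓝 (qPochInf Q Q)⁻¹) := by
  have h := (qs_tendsto Q hQ).inv₀ (qPochInf_ne_zero hQ hQ)
  have h2 : Tendsto (fun n : ℕ => ((n:ℤ) + r).toNat) atTop atTop := by
    rw [tendsto_atTop]
    intro b
    filter_upwards [eventually_ge_atTop (b + r.natAbs)] with n hn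
    omega
  refine (h.comp h2).congr' ?_
  filter_upwards [eventually_ge_atTop r.natAbs] with n hn
  have : 0 ≤ (n:ℤ) + r := by omega
  simp [qip, this]

lemma qip_conv (Q : ℂ) (u : ℤ → ℂ) (a b : ℕ) :
    ∑' r : ℤ, u r * (qip Q (b + r) * qip Q (a - r)) =
      ∑ p ∈ Finset.HasAntidiagonal.antidiagonal (a+b),
        u ((p.1:ℤ) - b) / (qPoch Q Q p.1 * qPoch Q Q p.2) := by
  rw [← (Equiv.subRight (b:ℤ)).tsum_eq, Finset.Nat.sum_antidiagonal_eq_sum_range_succ_mk,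
    tsum_eq_sum (s := (Finset.range (a+b).succ).map Nat.castEmbedding)]
  · rw [Finset.sum_map]
    apply Finset.sum_congr rfl
    intro s hs
    have hs' : s ≤ a + b := by simpa [Nat.lt_succ_iff] using hs
    have e1 : (b:ℤ) + ((s:ℤ) - b) = (s:ℕ) := by ring
    have e2 : (a:ℤ) - ((s:ℤ) - b) = ((a + b - s : ℕ):ℤ) := by omega
    simp only [Nat.castEmbedding_apply, Equiv.subRight_apply]
    rw [e1, e2, qip_nat, qip_nat, div_eq_mul_inv, mul_inv]
  · intro s hs
    simp only [Equiv.subRight_apply]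
    by_cases h : s < 0
    · rw [qip_neg Q (m := (b:ℤ) + (s - b)) (by omega)]; simp
    · have : ¬ s ≤ a + b := by
        intro h2
        apply hs
        simp only [Finset.mem_map, Finset.mem_range, Nat.castEmbedding_apply]
        exact ⟨s.toNat, by omega, by omega⟩
      rw [qip_neg Q (m := (a:ℤ) - (s - b)) (by omega)]; simp

lemma zshift {Y z : ℂ} (hY : Y ≠ 0) (hz : z ≠ 0) (n : ℕ) :
    qPoch (-(z * Y^(1 - 2*(n:ℤ)))) (Y^2) n
      = z^n * Y^(-((n:ℤ)^2)) * qPoch (-(Y/z)) (Y^2) n := by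
  induction n with
  | zero => simp [qPoch]
  | succ n ih =>
    have e1 : Y^(1 - 2*((n+1:ℕ):ℤ)) * Y^2 = Y^(1-2*(n:ℤ)) := by
      rw [← zpow_natCast Y 2, ← zpow_add₀ hY]; congr 1; push_cast; ring
    rw [add_comm n 1, qPoch_add, add_comm 1 n, pow_one,
      show -(z * Y^(1 - 2*((n+1:ℕ):ℤ))) * Y^2 = -(z * (Y^(1 - 2*((n+1:ℕ):ℤ)) * Y^2)) by ring, e1, ih,
      qPoch_succ (-(Y/z))]
    have e2 : qPoch (-(z * Y^(1 - 2*((n+1:ℕ):ℤ)))) (Y^2) 1 = 1 + z * Y^(1 - 2*((n+1:ℕ):ℤ)) := by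
      simp [qPoch]
    have e3 : Y^(-(((n+1:ℕ):ℤ)^2)) = Y^(-((n:ℤ)^2)) * Y^(1 - 2*((n+1:ℕ):ℤ)) := by
      rw [← zpow_add₀ hY]; congr 1; push_cast; ring
    have e4 : Y^(1 - 2*((n+1:ℕ):ℤ)) * (Y * (Y^2)^n) = 1 := by
      rw [← pow_mul, ← pow_succ', ← zpow_natCast, ← zpow_add₀ hY]
      rw [show 1 - 2*((n+1:ℕ):ℤ) + ((2*n+1 : ℕ):ℤ) = 0 by push_cast; ring, zpow_zero]
    rw [e2, e3]
    generalize Y^(1 - 2*((n+1:ℕ):ℤ)) = W at *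
    have : z * W * (1 - -(Y/z) * (Y^2)^n) = 1 + z * W := by
      field_simp
      linear_combination e4
    rw [← this]
    ring

lemma Pshift {Y z : ℂ} (hY : Y ≠ 0) (hY1 : ‖Y‖ < 1) (hz : z ≠ 0) (n : ℕ) :
    qPochInf (-(z * Y^(1 - 2*(n:ℤ)))) (Y^2)
      = z^n * Y^(-((n:ℤ)^2)) * qPoch (-(Y/z)) (Y^2) n * qPochInf (-(z*Y)) (Y^2) := by
  rw [qPochInf_split _ (norm_pow_lt hY1 two_ne_zero) n, zshift hY hz]
  congr 2
  rw [neg_mul, mul_assoc, ← pow_mul, ← zpow_natCast Y (2*n), ← zpow_add₀ hY]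
  congr 2
  rw [show 1 - 2*(n:ℤ) + ((2*n : ℕ):ℤ) = 1 by push_cast; ring, zpow_one]

lemma fin_jtp {Y z : ℂ} (hY : Y ≠ 0) (hY1 : ‖Y‖ < 1) (hz : z ≠ 0) (n : ℕ) :
    ∑' r : ℤ, (Y^(r^2) * z^r) * (qip (Y^2) (n + r) * qip (Y^2) (n - r)) =
      qPoch (-(Y/z)) (Y^2) n * qPoch (-(z*Y)) (Y^2) n * (qPoch (Y^2) (Y^2) (n+n))⁻¹ := by
  have hQ := norm_pow_lt hY1 two_ne_zero
  have hne := qPoch_ne_zero hQ hQ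
  rw [qip_conv (Y^2) (fun r => Y^(r^2) * z^r) n n]
  have h := fin_euler Y (z * Y^(-(2*(n:ℤ)))) hne (n+n)
  have e0 : (z * Y^(-(2*(n:ℤ)))) * Y = z * Y^(1-2*(n:ℤ)) := by
    rw [mul_assoc, ← zpow_add_one₀ hY]; congr 2; ring
  have e1 : -(z * Y^(1-2*(n:ℤ))) * (Y^2)^n = -(z * Y) := by
    rw [neg_mul, mul_assoc, ← pow_mul, ← zpow_natCast Y (2*n), ← zpow_add₀ hY]
    rw [show 1 - 2*(n:ℤ) + ((2*n : ℕ):ℤ) = 1 by push_cast; ring, zpow_one]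
  rw [e0, qPoch_add, zshift hY hz, e1] at h
  have hk : z^n * Y^(-((n:ℤ)^2)) ≠ 0 := mul_ne_zero (pow_ne_zero _ hz) (zpow_ne_zero _ hY)
  apply mul_left_cancel₀ hk
  rw [Finset.mul_sum]
  refine Eq.trans (Finset.sum_congr rfl ?_) (h.trans (by ring))
  intro p hp
  rw [← mul_div_assoc]
  congr 1
  rw [mul_pow, ← zpow_natCast (Y^(-(2*(n:ℤ)))), ← zpow_mul, ← zpow_natCast z n,
    ← zpow_natCast z p.1, ← zpow_natCast Y (p.1^2)]
  calc _ = (Y^(-((n:ℤ)^2)) * Y^(((p.1:ℤ)-n)^2)) * (z^(n:ℤ) * z^((p.1:ℤ)-n)) := by ring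
    _ = Y^((p.1:ℤ)^2 + (-(2*(n:ℤ)))*(p.1:ℤ)) * z^(p.1:ℤ) := by
      rw [← zpow_add₀ hY, ← zpow_add₀ hz]
      congr 2 <;> ring
    _ = _ := by
      rw [zpow_add₀ hY]; push_cast; ring

lemma jtp {Y z : ℂ} (hY : Y ≠ 0) (hY1 : ‖Y‖ < 1) (hz : z ≠ 0) :
    ∑' r : ℤ, Y^(r^2) * z^r =
      qPochInf (-(Y/z)) (Y^2) * qPochInf (-(z*Y)) (Y^2) * qPochInf (Y^2) (Y^2) := by
  have hQ := norm_pow_lt hY1 two_ne_zero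
  have hP := qPochInf_ne_zero hQ hQ
  obtain ⟨C, hC0, hC⟩ := qip_bdd hQ
  have key : Tendsto (fun n : ℕ => ∑' r : ℤ,
      (Y^(r^2) * z^r) * (qip (Y^2) (n + r) * qip (Y^2) (n - r))) atTop
      (𝓝 (∑' r : ℤ, (Y^(r^2) * z^r) * ((qPochInf (Y^2) (Y^2))⁻¹ * (qPochInf (Y^2) (Y^2))⁻¹))) := by
    refine tendsto_tsum_of_dominated_convergence (bound := fun r => ‖Y^(r^2) * z^r‖ * (C*C)) ?_ ?_ ?_
    · exact (gauss_summable_int hY1 z).mul_right _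
    · intro r
      exact ((qip_tendsto hQ r).mul (qip_tendsto hQ (-r))).const_mul _
    · refine Eventually.of_forall fun n r => ?_
      rw [norm_mul, norm_mul (qip _ _)]
      gcongr
      · exact hC _
      · exact hC _
  simp only [fin_jtp hY hY1 hz] at key
  have h2 : Tendsto (fun n : ℕ => n + n) atTop atTop :=
    tendsto_atTop_mono (fun n => Nat.le_add_left n n) tendsto_id
  have h4 := tendsto_nhds_unique key
    (((qs_tendsto _ hQ).mul (qs_tendsto _ hQ)).mul (((qs_tendsto (Y^2) hQ).inv₀ hP).comp h2))
  rw [tsum_mul_right] at h4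
  field_simp at h4
  rw [h4, mul_comm z Y]
  ring

lemma phi11' {Y : ℂ} (hY : ‖Y‖ < 1) (a β : ℂ) (e : ℕ) (h : -(a*β*Y) = (Y^2)^(e+1)) :
    ∑' s : ℕ, qPoch a (Y^2) s * (Y^(s^2) * β^s) *
      ((qPoch (Y^2) (Y^2) (s+e))⁻¹ * (qPoch (Y^2) (Y^2) s)⁻¹)
      = qPochInf (-(β*Y)) (Y^2) / qPochInf (Y^2) (Y^2) := by
  have hQ := norm_pow_lt hY two_ne_zero
  have hP := qPochInf_ne_zero hQ hQ
  rw [← phi11 hY a β, ← tsum_div_const]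
  congr 1; ext s
  have hs := qPochInf_split (Y^2) hQ (s+e)
  have hne := qPoch_ne_zero hQ hQ (s+e)
  rw [h, show (Y^2)^(e+1) * (Y^2)^s = Y^2 * (Y^2)^(s+e) by ring]
  have : qPochInf (Y^2 * (Y^2)^(s+e)) (Y^2) / qPochInf (Y^2) (Y^2) =
    (qPoch (Y^2) (Y^2) (s+e))⁻¹ := by
      rw [div_eq_iff hP, hs]; field_simp
  rw [mul_div_assoc, this]
  ring

lemma cbA_nat {Y : ℂ} (hY : ‖Y‖ < 1) (ρ : ℕ) :
    ∑' n : ℕ, (Y^(n^2) * qPoch (-Y) (Y^2) n) * (qip (Y^2) (n + ρ) * qip (Y^2) (n - ρ))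
      = Y^(ρ^2) * (qPochInf (-Y) (Y^2) / qPochInf (Y^2) (Y^2)) := by
  have hQ := norm_pow_lt hY two_ne_zero
  rw [← (add_left_injective ρ).tsum_eq]
  · rw [qPochInf_split (-Y) hQ ρ, show (-Y) * (Y^2)^ρ = -((Y^2)^ρ * Y) by ring,
      mul_div_assoc, ← phi11' hY (-((Y^2)^ρ * Y)) ((Y^2)^ρ) (2*ρ) (by ring), ← mul_assoc,
      ← tsum_mul_left]
    congr 1; ext s
    rw [show (((s+ρ:ℕ):ℤ) + ρ) = ((s+2*ρ : ℕ):ℤ) by push_cast; ring,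
      show (((s+ρ:ℕ):ℤ) - ρ) = (s : ℕ) by push_cast; ring, qip_nat, qip_nat, add_comm s ρ, qPoch_add,
      show (-Y) * (Y^2)^ρ = -((Y^2)^ρ * Y) by ring]
    ring
  · intro n hn
    by_contra h
    apply hn
    have : n < ρ := by
      by_contra h2
      exact h ⟨n - ρ, by simp; omega⟩
    beta_reduce
    rw [qip_neg (Y^2) (m := (n:ℤ) - ρ) (by omega)]
    simp

lemma cbB_nat {Y : ℂ} (hY : ‖Y‖ < 1) (ρ : ℕ) :
    ∑' n : ℕ, (Y^(n^2+n) * qPoch (-Y^2) (Y^2) n) * (qip (Y^2) (n + 1 + ρ) * qip (Y^2) (n - ρ))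
      = Y^(ρ^2+ρ) * (qPochInf (-Y^2) (Y^2) / qPochInf (Y^2) (Y^2)) := by
  have hQ := norm_pow_lt hY two_ne_zero
  rw [← (add_left_injective ρ).tsum_eq]
  · rw [qPochInf_split (-Y^2) hQ ρ, show (-Y^2) * (Y^2)^ρ = -(((Y^2)^ρ * Y) * Y) by ring,
      mul_div_assoc, ← phi11' hY (-(((Y^2)^ρ * Y) * Y)) ((Y^2)^ρ * Y) (2*ρ+1) (by ring), ← mul_assoc,
      ← tsum_mul_left]
    congr 1; ext s
    rw [show (((s+ρ:ℕ):ℤ) + 1 + ρ) = ((s+(2*ρ+1) : ℕ):ℤ) by push_cast; ring,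
      show (((s+ρ:ℕ):ℤ) - ρ) = (s : ℕ) by push_cast; ring, qip_nat, qip_nat, add_comm s ρ, qPoch_add,
      show (-Y^2) * (Y^2)^ρ = -(((Y^2)^ρ * Y) * Y) by ring]
    ring
  · intro n hn
    by_contra h
    apply hn
    have : n < ρ := by
      by_contra h2
      exact h ⟨n - ρ, by simp; omega⟩
    beta_reduce
    rw [qip_neg (Y^2) (m := (n:ℤ) - ρ) (by omega)]
    simp

lemma cbA {Y : ℂ} (hY : ‖Y‖ < 1) (r : ℤ) :
    ∑' n : ℕ, (Y^(n^2) * qPoch (-Y) (Y^2) n) * (qip (Y^2) (n + r) * qip (Y^2) (n - r))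
      = Y^(r^2) * (qPochInf (-Y) (Y^2) / qPochInf (Y^2) (Y^2)) := by
  obtain ⟨ρ, rfl | rfl⟩ := r.eq_nat_or_neg
  · rw [cbA_nat hY]; norm_cast
  · rw [neg_sq]
    have := cbA_nat hY ρ
    rw [show Y^((ρ:ℤ)^2) = Y^(ρ^2) by norm_cast, ← this]
    congr 1; ext n
    rw [sub_neg_eq_add, ← sub_eq_add_neg, mul_comm (qip _ _)]

lemma cbB {Y : ℂ} (hY : ‖Y‖ < 1) (r : ℤ) :
    ∑' n : ℕ, (Y^(n^2+n) * qPoch (-Y^2) (Y^2) n) * (qip (Y^2) (n + 1 + r) * qip (Y^2) (n - r))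
      = Y^(r^2+r) * (qPochInf (-Y^2) (Y^2) / qPochInf (Y^2) (Y^2)) := by
  obtain ⟨ρ, h | h⟩ : ∃ ρ : ℕ, r = ρ ∨ r = -1 - ρ := by
    by_cases h : 0 ≤ r
    · exact ⟨r.toNat, by omega⟩
    · exact ⟨(-1-r).toNat, by omega⟩
  · subst h
    rw [cbB_nat hY]; norm_cast
  · subst h
    have := cbB_nat hY ρ
    rw [show Y^((-1-(ρ:ℤ))^2+(-1-(ρ:ℤ))) = Y^(ρ^2+ρ) by
      rw [← zpow_natCast]; congr 1; push_cast; ring, ← this]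
    congr 1; ext n
    rw [show (n:ℤ) + 1 + (-1-ρ) = n - ρ by ring, show (n:ℤ) - (-1-ρ) = n + 1 + ρ by ring,
      mul_comm (qip _ _)]

lemma swap_sum {c : ℕ → ℂ} {u : ℤ → ℂ} {K : ℕ → ℤ → ℂ} {C : ℝ} (hc : Summable fun n => ‖c n‖)
    (hu : Summable fun r => ‖u r‖) (hK : ∀ n r, ‖K n r‖ ≤ C) :
    ∑' n, c n * ∑' r, u r * K n r = ∑' r, u r * ∑' n, c n * K n r := by
  have hs : Summable (Function.uncurry fun (n:ℕ) (r:ℤ) => c n * (u r * K n r)) := by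
    refine Summable.of_norm_bounded ((hc.mul_of_nonneg hu (fun _ => norm_nonneg _)
      (fun _ => norm_nonneg _)).mul_right C) ?_
    rintro ⟨n, r⟩
    simp only [Function.uncurry]
    rw [← mul_assoc, norm_mul, norm_mul]
    gcongr
    exact hK n r
  simp only [← tsum_mul_left]
  rw [← hs.tsum_comm]
  congr 1; ext r
  congr 1; ext n
  ring

end bailey
section final

lemma beta_even {q Y : ℂ} (hq : q ≠ 0) (h1 : ‖q‖ < 1) (hYq : Y = q^2) (n : ℕ) :
    (qPoch Y Y (n+n))⁻¹ =
      ∑' r : ℤ, Y^(2*r^2 - r) * (qip (Y^2) (n + r) * qip (Y^2) (n - r)) := by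
  have h2 := norm_pow_lt h1 two_ne_zero
  have h4 := norm_pow_lt h1 four_ne_zero
  have h := fin_rs q hq (qPoch_ne_zero h4 h4) (qPoch_ne_zero h2 h2) (n+n)
  rw [qip_conv (Y^2) (fun r => Y^(2*r^2 - r)) n n, hYq, ← h, show (q^2)^2 = q^4 by ring]
  apply Finset.sum_congr rfl
  intro p hp
  have hp' : (p.2:ℤ) = n + n - p.1 := by
    have := Finset.HasAntidiagonal.mem_antidiagonal.mp hp
    omega
  congr 1
  rw [hp', ← zpow_natCast q 2, ← zpow_mul]
  congr 1; push_cast; ring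

lemma beta_odd {q Y : ℂ} (hq : q ≠ 0) (h1 : ‖q‖ < 1) (hYq : Y = q^2) (n : ℕ) :
    (qPoch Y Y (n+(n+1)))⁻¹ =
      ∑' r : ℤ, Y^(2*r^2 + r) * (qip (Y^2) (n + 1 + r) * qip (Y^2) (n - r)) := by
  have h2 := norm_pow_lt h1 two_ne_zero
  have h4 := norm_pow_lt h1 four_ne_zero
  have h := fin_rs q hq (qPoch_ne_zero h4 h4) (qPoch_ne_zero h2 h2) (n+(n+1))
  have h' := qip_conv (Y^2) (fun r => Y^(2*r^2 + r)) n (n+1)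
  push_cast at h'
  rw [h', hYq, ← h, show (q^2)^2 = q^4 by ring]
  apply Finset.sum_congr rfl
  intro p hp
  have hp' : (p.2:ℤ) = n + n + 1 - p.1 := by
    have := Finset.HasAntidiagonal.mem_antidiagonal.mp hp
    omega
  congr 1
  rw [hp', ← zpow_natCast q 2, ← zpow_mul]
  congr 1; push_cast; ring

lemma slaterA {q Y : ℂ} (hq : q ≠ 0) (h1 : ‖q‖ < 1) (hYq : Y = q^2) :
    ∑' n : ℕ, (Y^(n^2) * qPoch (-Y) (Y^2) n) * (qPoch Y Y (n+n))⁻¹ =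
      qPochInf (-Y) (Y^2) / qPochInf (Y^2) (Y^2) *
      (qPochInf (-Y^4) (Y^6) * qPochInf (-Y^2) (Y^6) * qPochInf (Y^6) (Y^6)) := by
  have hY1 : ‖Y‖ < 1 := by rw [hYq]; exact norm_pow_lt h1 two_ne_zero
  have hY : Y ≠ 0 := by rw [hYq]; exact pow_ne_zero _ hq
  have hQ := norm_pow_lt hY1 two_ne_zero
  obtain ⟨C, hC0, hC⟩ := qip_bdd hQ
  obtain ⟨D, hD0, hD⟩ := qPoch_bdd (-Y) hQ
  simp only [beta_even hq h1 hYq]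
  rw [swap_sum (C := C*C)]
  · simp only [cbA hY1]
    simp only [← mul_assoc]
    rw [tsum_mul_right, mul_comm]
    have := jtp (pow_ne_zero 3 hY) (norm_pow_lt hY1 three_ne_zero) (inv_ne_zero hY)
    rw [show Y^3 / Y⁻¹ = Y^4 by field_simp, show Y⁻¹ * Y^3 = Y^2 by field_simp,
      show (Y^3)^2 = Y^6 by ring] at this
    rw [mul_assoc, mul_assoc, ← mul_assoc (qPochInf (-Y^4) _), ← this]
    congr 1
    congr 1; ext r
    rw [← zpow_natCast Y 3, ← zpow_mul, ← zpow_add₀ hY, inv_zpow', ← zpow_add₀ hY]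
    congr 1; push_cast; ring
  · have := (gauss_summable_norm hY1 1).mul_right D
    refine Summable.of_nonneg_of_le (fun _ => norm_nonneg _) (fun n => ?_) this
    rw [one_pow, mul_one, norm_mul]
    gcongr
    exact hD n
  · refine (gauss_summable_int (norm_pow_lt hY1 two_ne_zero) Y⁻¹).congr ?_
    intro r
    rw [← zpow_natCast Y 2, ← zpow_mul, inv_zpow', ← zpow_add₀ hY]
    congr 1
  · intro n r
    rw [norm_mul]
    gcongr
    · exact hC _
    · exact hC _

lemma slaterB {q Y : ℂ} (hq : q ≠ 0) (h1 : ‖q‖ < 1) (hYq : Y = q^2) :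
    ∑' n : ℕ, (Y^(n^2+n) * qPoch (-Y^2) (Y^2) n) * (qPoch Y Y (n+(n+1)))⁻¹ =
      qPochInf (-Y^2) (Y^2) / qPochInf (Y^2) (Y^2) *
      (qPochInf (-Y) (Y^6) * qPochInf (-Y^5) (Y^6) * qPochInf (Y^6) (Y^6)) := by
  have hY1 : ‖Y‖ < 1 := by rw [hYq]; exact norm_pow_lt h1 two_ne_zero
  have hY : Y ≠ 0 := by rw [hYq]; exact pow_ne_zero _ hq
  have hQ := norm_pow_lt hY1 two_ne_zero
  obtain ⟨C, hC0, hC⟩ := qip_bdd hQ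
  obtain ⟨D, hD0, hD⟩ := qPoch_bdd (-Y^2) hQ
  simp only [beta_odd hq h1 hYq]
  rw [swap_sum (C := C*C)]
  · simp only [cbB hY1]
    simp only [← mul_assoc]
    rw [tsum_mul_right, mul_comm]
    have := jtp (pow_ne_zero 3 hY) (norm_pow_lt hY1 three_ne_zero) (pow_ne_zero 2 hY)
    rw [show Y^3 / Y^2 = Y by field_simp, show Y^2 * Y^3 = Y^5 by ring,
      show (Y^3)^2 = Y^6 by ring] at this
    rw [mul_assoc, mul_assoc, ← mul_assoc (qPochInf (-Y) (Y^6)), ← this]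
    congr 1
    congr 1; ext r
    rw [← zpow_natCast Y 3, ← zpow_natCast Y 2, ← zpow_mul, ← zpow_mul, ← zpow_add₀ hY,
      ← zpow_add₀ hY]
    congr 1; push_cast; ring
  · have := (gauss_summable_norm hY1 Y).mul_right D
    refine Summable.of_nonneg_of_le (fun _ => norm_nonneg _) (fun n => ?_) this
    rw [← pow_add, norm_mul]
    gcongr
    exact hD n
  · refine (gauss_summable_int (norm_pow_lt hY1 two_ne_zero) Y).congr ?_
    intro r
    rw [← zpow_natCast Y 2, ← zpow_mul, ← zpow_add₀ hY]
    congr 1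
  · intro n r
    rw [norm_mul]
    gcongr
    · exact hC _
    · exact hC _

lemma qPochInf_neg_one {Q : ℂ} (hQ : ‖Q‖ < 1) : qPochInf (-1) Q = 2 * qPochInf (-Q) Q := by
  rw [qPochInf_split (-1) hQ 1]
  simp only [qPoch, Finset.prod_range_one, pow_zero, pow_one]
  rw [neg_one_mul]
  ring

lemma term_even {q Y : ℂ} (hq : q ≠ 0) (h1 : ‖q‖ < 1) (hYq : Y = q^2) (m : ℕ) :
    q^(2*(((2*m:ℕ):ℤ))^2 + ((2*m:ℕ):ℤ)) / qPoch (Y^2) (Y^2) (2*m) *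
      (qPochInf (-(Y^(1-((2*m:ℕ):ℤ)))) (Y^2) * (qPochInf (-(Y^(1-((2*m:ℕ):ℤ)))) (Y^2) *
        qPochInf (-(Y^(-((2*m:ℕ):ℤ)))) (Y^2)))
     = (2 * qPochInf (-Y) (Y^2)^2 * qPochInf (-Y^2) (Y^2)) *
      ((Y^(m^2) * qPoch (-Y) (Y^2) m) * (qPoch Y Y (m+m))⁻¹) := by
  have hY1 : ‖Y‖ < 1 := by rw [hYq]; exact norm_pow_lt h1 two_ne_zero
  have hY : Y ≠ 0 := by rw [hYq]; exact pow_ne_zero _ hq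
  have hQ := norm_pow_lt hY1 two_ne_zero
  have hY1' : ‖-Y‖ < 1 := by rwa [norm_neg]
  have hQ' : ‖-Y^2‖ < 1 := by rwa [norm_neg]
  have a1 := Pshift hY hY1 one_ne_zero m
  have a2 := Pshift hY hY1 (inv_ne_zero hY) m
  rw [inv_mul_cancel₀ hY, qPochInf_neg_one hQ, show Y / Y⁻¹ = Y^2 by field_simp,
    show Y⁻¹ * Y^(1-2*(m:ℤ)) = Y^(-((2*m:ℕ):ℤ)) by
      rw [← zpow_neg_one, ← zpow_add₀ hY]; congr 1; push_cast; ring] at a2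
  simp only [one_mul, one_pow, div_one] at a1
  rw [show 1 - 2*(m:ℤ) = 1 - ((2*m:ℕ):ℤ) by push_cast; ring] at a1
  rw [a1, a2, ← qPoch_mul, qPoch_even (-Y), show -Y*Y = -Y^2 by ring, ← two_mul]
  have b1 := qPoch_ne_zero hY1' hQ m
  have b2 := qPoch_ne_zero hQ' hQ m
  have b3 := qPoch_ne_zero hY1 hY1 (2*m)
  have e : q^(2*(((2*m:ℕ):ℤ))^2 + ((2*m:ℕ):ℤ)) = Y^(m^2) * Y^m * (Y^(m^2))^3 := by
    rw [← pow_mul, ← pow_add, ← pow_add, hYq, ← pow_mul, ← zpow_natCast]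
    congr 1; push_cast; ring
  have e2 : Y^(-((m:ℤ)^2)) = (Y^(m^2))⁻¹ := by
    rw [zpow_neg]; norm_cast
  rw [e, e2, inv_pow]
  have c1 : Y^(m^2) ≠ 0 := pow_ne_zero _ hY
  have c2 : Y^m ≠ 0 := pow_ne_zero _ hY
  field_simp

lemma term_odd {q Y : ℂ} (hq : q ≠ 0) (h1 : ‖q‖ < 1) (hYq : Y = q^2) (m : ℕ) :
    q^(2*(((2*m+1:ℕ):ℤ))^2 + ((2*m+1:ℕ):ℤ)) / qPoch (Y^2) (Y^2) (2*m+1) *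
      (qPochInf (-(Y^(1-((2*m+1:ℕ):ℤ)))) (Y^2) * (qPochInf (-(Y^(1-((2*m+1:ℕ):ℤ)))) (Y^2) *
        qPochInf (-(Y^(-((2*m+1:ℕ):ℤ)))) (Y^2)))
     = (4 * q * qPochInf (-Y^2) (Y^2)^2 * qPochInf (-Y) (Y^2)) *
      ((Y^(m^2+m) * qPoch (-Y^2) (Y^2) m) * (qPoch Y Y (m+(m+1)))⁻¹) := by
  have hY1 : ‖Y‖ < 1 := by rw [hYq]; exact norm_pow_lt h1 two_ne_zero
  have hY : Y ≠ 0 := by rw [hYq]; exact pow_ne_zero _ hq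
  have hQ := norm_pow_lt hY1 two_ne_zero
  have hY1' : ‖-Y‖ < 1 := by rwa [norm_neg]
  have hQ' : ‖-Y^2‖ < 1 := by rwa [norm_neg]
  have a1 := Pshift hY hY1 one_ne_zero (m+1)
  have a2 := Pshift hY hY1 (inv_ne_zero hY) m
  rw [inv_mul_cancel₀ hY, qPochInf_neg_one hQ, show Y / Y⁻¹ = Y^2 by field_simp,
    show Y⁻¹ * Y^(1-2*(m:ℤ)) = Y^(1-((2*m+1:ℕ):ℤ)) by
      rw [← zpow_neg_one, ← zpow_add₀ hY]; congr 1; push_cast; ring] at a2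
  simp only [one_mul, one_pow, div_one] at a1
  rw [show 1 - 2*((m+1:ℕ):ℤ) = - ((2*m+1:ℕ):ℤ) by push_cast; ring] at a1
  have d : qPoch (-Y) Y (2*m+1) = qPoch (-Y) (Y^2) (m+1) * qPoch (-Y^2) (Y^2) m := by
    rw [qPoch_succ, qPoch_even, qPoch_succ, show -Y*Y = -Y^2 by ring]; ring
  rw [a1, a2, ← qPoch_mul, d, show m + (m+1) = 2*m+1 by ring]
  have b1 := qPoch_ne_zero hY1' hQ (m+1)
  have b2 := qPoch_ne_zero hQ' hQ m
  have b3 := qPoch_ne_zero hY1 hY1 (2*m+1)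
  have e : q^(2*(((2*m+1:ℕ):ℤ))^2 + ((2*m+1:ℕ):ℤ)) =
      q * Y^(m^2+m) * (Y^m)^2 * (Y^(m^2))^2 * Y^((m+1)^2) := by
    rw [hYq]
    simp only [← pow_mul, ← pow_add, ← pow_succ']
    rw [← zpow_natCast]
    congr 1; push_cast; ring
  have e2 : Y^(-((m:ℤ)^2)) = (Y^(m^2))⁻¹ := by
    rw [zpow_neg]; norm_cast
  have e3 : Y^(-(((m+1:ℕ):ℤ)^2)) = (Y^((m+1)^2))⁻¹ := by
    rw [zpow_neg]; norm_cast
  rw [e, e2, e3, inv_pow]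
  have c1 : Y^(m^2) ≠ 0 := pow_ne_zero _ hY
  have c2 : Y^m ≠ 0 := pow_ne_zero _ hY
  have c3 : Y^((m+1)^2) ≠ 0 := pow_ne_zero _ hY
  generalize Y^(m^2) = u1 at *
  generalize Y^m = u2 at *
  generalize Y^((m+1)^2) = u3 at *
  field_simp
  ring

/-- the summand -/
noncomputable def qterm (q : ℂ) (i j k l : ℕ) : ℂ :=
  q ^ ((2*(i:ℤ)^2 + 2*(j:ℤ)^2 + 2*(k:ℤ)^2 + 2*(l:ℤ)^2 - 2*(i:ℤ)*(l:ℤ) - 2*(j:ℤ)*(l:ℤ) - 2*(k:ℤ)*(l:ℤ) - 2*(k:ℤ) + (l:ℤ)) : ℤ) /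
          (qPoch (q ^ 4) (q ^ 4) i * qPoch (q ^ 4) (q ^ 4) j * qPoch (q ^ 4) (q ^ 4) k * qPoch (q ^ 4) (q ^ 4) l)

lemma qterm_summable {q : ℂ} (h0 : 0 < ‖q‖) (h1 : ‖q‖ < 1) :
    Summable (fun p : ℕ × ℕ × ℕ × ℕ => qterm q p.1 p.2.1 p.2.2.1 p.2.2.2) := by
  have hQ := norm_pow_lt h1 four_ne_zero
  obtain ⟨C, hC0, hC⟩ := qPoch_inv_bdd hQ
  obtain ⟨w, hw0, hw1, hw4⟩ : ∃ w : ℝ, 0 < w ∧ w < 1 ∧ w^4 = ‖q‖ := by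
    refine ⟨√√‖q‖, by positivity, ?_, ?_⟩
    · rw [Real.sqrt_lt' one_pos, Real.sqrt_lt' (by norm_num)]; simpa using h1
    · rw [show (√√‖q‖)^4 = ((√√‖q‖)^2)^2 by ring, Real.sq_sqrt (by positivity),
        Real.sq_sqrt h0.le]
  have g1 := gauss_summable 1 hw0.le hw1 zero_le_one
  have g2 := gauss_summable ((w^8)⁻¹) hw0.le hw1 (by positivity)
  have nn : ∀ c : ℝ, 0 ≤ c → (0 : ℕ → ℝ) ≤ fun n => w^(n^2) * c^n :=
    fun c hc n => by simp only [Pi.zero_apply]; positivity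
  have b1 := g2.mul_of_nonneg g1 (nn _ (by positivity)) (nn _ zero_le_one)
  have b2 := g1.mul_of_nonneg b1 (nn _ zero_le_one) (fun _ => by simp only [Pi.zero_apply]; positivity)
  have b3 := (g1.mul_of_nonneg b2 (nn _ zero_le_one)
    (fun _ => by simp only [Pi.zero_apply]; positivity)).mul_right (C*C*C*C)
  refine Summable.of_norm_bounded b3 ?_
  rintro ⟨i, j, k, l⟩
  simp only [qterm, one_pow, mul_one]
  rw [div_eq_mul_inv, mul_inv, mul_inv, mul_inv, norm_mul, norm_mul, norm_mul, norm_mul]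
  gcongr ?_ * (?_ * ?_ * ?_ * ?_)
  · rw [norm_zpow, ← hw4, ← zpow_natCast w 4, ← zpow_mul]
    calc _ ≤ w^((i:ℤ)^2 + ((j:ℤ)^2 + (((k:ℤ)^2 - 8*k) + (l:ℤ)^2))) := by
          apply zpow_le_zpow_right_of_le_one₀ hw0 hw1.le
          push_cast
          nlinarith [sq_nonneg (7*(i:ℤ)-4*l), sq_nonneg (7*(j:ℤ)-4*l), sq_nonneg (7*(k:ℤ)-4*l),
            sq_nonneg (l:ℤ), Int.natCast_nonneg l]
      _ = _ := by
        rw [zpow_add₀ hw0.ne', zpow_add₀ hw0.ne', zpow_add₀ hw0.ne', zpow_sub₀ hw0.ne',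
          inv_pow, ← pow_mul, div_eq_mul_inv]
        norm_cast
  · exact hC i
  · exact hC j
  · exact hC k
  · exact hC l

def reord : ℕ × (ℕ × ℕ × ℕ) ≃ ℕ × ℕ × ℕ × ℕ where
  toFun p := (p.2.1, p.2.2.1, p.2.2.2, p.1)
  invFun p := (p.2.2.2, p.1, p.2.1, p.2.2.1)
  left_inv _ := rfl
  right_inv _ := rfl

lemma qterm_inner {q Y : ℂ} (hq : q ≠ 0) (h1 : ‖q‖ < 1) (hYq : Y = q^2) (l : ℕ) :
    ∑' p : ℕ × ℕ × ℕ, qterm q p.1 p.2.1 p.2.2 l =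
    q^(2*(l:ℤ)^2 + (l:ℤ)) / qPoch (Y^2) (Y^2) l *
      (qPochInf (-(Y^(1-(l:ℤ)))) (Y^2) * (qPochInf (-(Y^(1-(l:ℤ)))) (Y^2) *
        qPochInf (-(Y^(-(l:ℤ)))) (Y^2))) := by
  have hY1 : ‖Y‖ < 1 := by rw [hYq]; exact norm_pow_lt h1 two_ne_zero
  have hY : Y ≠ 0 := by rw [hYq]; exact pow_ne_zero _ hq
  have hQ := norm_pow_lt hY1 two_ne_zero
  have s1 := euler_summable hY1 (Y^(-(l:ℤ)))
  have s2 := euler_summable hY1 (Y^(-(l:ℤ)-1))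
  rw [show Y^(1-(l:ℤ)) = Y^(-(l:ℤ)) * Y by rw [← zpow_add_one₀ hY]; congr 1; ring,
    show qPochInf (-(Y^(-(l:ℤ)))) (Y^2) = qPochInf (-(Y^(-(l:ℤ)-1) * Y)) (Y^2) by
      rw [← zpow_add_one₀ hY]; congr 3; ring,
    ← euler_sum hY1, ← euler_sum hY1, tsum_mul_tsum_of_summable_norm s1 s2,
    tsum_mul_tsum_of_summable_norm s1 (s1.mul_norm s2), ← tsum_mul_left]
  congr 1; ext ⟨i, j, k⟩
  have hne := qPoch_ne_zero hQ hQ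
  simp only [qterm]
  rw [show q^4 = Y^2 by rw [hYq]; ring]
  have e : q ^ ((2*(i:ℤ)^2 + 2*(j:ℤ)^2 + 2*(k:ℤ)^2 + 2*(l:ℤ)^2 - 2*(i:ℤ)*(l:ℤ) - 2*(j:ℤ)*(l:ℤ) - 2*(k:ℤ)*(l:ℤ) - 2*(k:ℤ) + (l:ℤ)) : ℤ)
    = q^(2*(l:ℤ)^2 + (l:ℤ)) * ((Y^(i^2) * (Y^(-(l:ℤ)))^i) * ((Y^(j^2) * (Y^(-(l:ℤ)))^j) *
      (Y^(k^2) * (Y^(-(l:ℤ)-1))^k))) := by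
    rw [hYq]
    simp only [← zpow_natCast, ← zpow_mul, ← zpow_add₀ hq]
    congr 1; push_cast; ring
  rw [e]
  have n1 := hne i
  have n2 := hne j
  have n3 := hne k
  have n4 := hne l
  field_simp

lemma final_prod {q : ℂ} (h1 : ‖q‖ < 1) :
    (2 * qPochInf (-q^2) ((q^2)^2)^2 * qPochInf (-(q^2)^2) ((q^2)^2)) *
     (qPochInf (-q^2) ((q^2)^2) / qPochInf ((q^2)^2) ((q^2)^2) *
      (qPochInf (-(q^2)^4) ((q^2)^6) * qPochInf (-(q^2)^2) ((q^2)^6) * qPochInf ((q^2)^6) ((q^2)^6)))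
    + (4 * q * qPochInf (-(q^2)^2) ((q^2)^2)^2 * qPochInf (-q^2) ((q^2)^2)) *
     (qPochInf (-(q^2)^2) ((q^2)^2) / qPochInf ((q^2)^2) ((q^2)^2) *
      (qPochInf (-q^2) ((q^2)^6) * qPochInf (-(q^2)^5) ((q^2)^6) * qPochInf ((q^2)^6) ((q^2)^6)))
    = 2 * (J q 4)^3 * (J q 12)^2 / ((J q 2)^3 * J q 8 * J q 24)
      + 4 * q * J q 6 * J q 8 * J q 24 / ((J q 2)^2 * J q 12) := by
  simp only [← pow_mul]
  norm_num only
  have N : ∀ n : ℕ, n ≠ 0 → ‖q^n‖ < 1 := fun n hn => norm_pow_lt h1 hn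
  have JN : ∀ n : ℕ, n ≠ 0 → J q n ≠ 0 := fun n hn => qPochInf_ne_zero (N n hn) (N n hn)
  have JD : ∀ n : ℕ, qPochInf (q^n) (q^n) = J q n := fun n => rfl
  -- generic relations
  have R1 : ∀ n : ℕ, n ≠ 0 → qPochInf (-q^n) (q^n) * J q n = J q (2*n) := by
    intro n hn
    have := qPochInf_mul (q^n) (N n hn)
    rw [← pow_mul, mul_comm n 2] at this
    rw [J, J, ← this, mul_comm]
  have R2 : ∀ n : ℕ, n ≠ 0 → qPochInf (-q^n) (q^(2*n)) * J q n * J q (4*n) = J q (2*n)^2 := by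
    intro n hn
    have a := qPochInf_mul (q^n) (N (2*n) (by omega))
    have b := qPochInf_two (q^n) (N n hn)
    have c := qPochInf_two (q^(2*n)) (N (2*n) (by omega))
    simp only [← pow_mul, ← pow_add] at a b c
    rw [show n*2 = 2*n by ring, show 2*n*2 = 4*n by ring] at a
    rw [show n*2 = 2*n by ring, show n+n = 2*n by ring] at b
    rw [show 2*n*2 = 4*n by ring, show 2*n+2*n = 4*n by ring] at c
    simp only [JD] at a b c
    rw [b]
    linear_combination (J q (2*n) * J q (4*n)) * a - J q (2*n) * c
  have T1 := qPochInf_three (-q^4) (N 4 (by norm_num))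
  have T2 := qPochInf_three (-q^2) (N 4 (by norm_num))
  simp only [neg_mul, ← pow_mul, ← pow_add] at T1 T2
  norm_num only at T1 T2
  have u := R2 2 (by norm_num)
  have u3 := R2 6 (by norm_num)
  have v := R1 4 (by norm_num)
  have w := R1 12 (by norm_num)
  norm_num only at u u3 v w
  have j2 := JN 2 (by norm_num)
  have j4 := JN 4 (by norm_num)
  have j6 := JN 6 (by norm_num)
  have j8 := JN 8 (by norm_num)
  have j12 := JN 12 (by norm_num)
  have j24 := JN 24 (by norm_num)
  simp only [JD]
  generalize J q 2 = J2 at *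
  generalize J q 4 = J4 at *
  generalize J q 6 = J6 at *
  generalize J q 8 = J8 at *
  generalize J q 12 = J12 at *
  generalize J q 24 = J24 at *
  have u' : qPochInf (-q^2) (q^4) = J4^2 / (J2*J8) := by
    rw [eq_div_iff (by positivity)]; linear_combination u
  have v' : qPochInf (-q^4) (q^4) = J8/J4 := by rw [eq_div_iff j4]; exact v
  have t1 : qPochInf (-q^8) (q^12) * qPochInf (-q^4) (q^12) = J8 * J12 / (J4 * J24) := by
    rw [eq_div_iff (mul_ne_zero j4 j24), ← w, ← v, T1]; ring
  have hu3 : qPochInf (-q^6) (q^12) ≠ 0 := by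
    intro h; rw [h] at u3
    simp only [zero_mul] at u3
    exact pow_ne_zero 2 j12 u3.symm
  have t2 : qPochInf (-q^2) (q^12) * qPochInf (-q^10) (q^12) = J4^2 * J6 * J24 / (J2 * J8 * J12^2) := by
    have : qPochInf (-q^2) (q^12) * qPochInf (-q^10) (q^12) * qPochInf (-q^6) (q^12)
      = J4^2 / (J2*J8) := by rw [← u', T2]; ring
    apply mul_right_cancel₀ hu3
    rw [this]
    have : qPochInf (-q^6) (q^12) = J12^2 / (J6 * J24) := by
      rw [eq_div_iff (mul_ne_zero j6 j24)]; linear_combination u3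
    rw [this]
    field_simp
  rw [t1, t2, u', v']
  field_simp

end final

lemma qsum_key {q : ℂ} (h0 : 0 < ‖q‖) (h1 : ‖q‖ < 1) :
    Summable (fun l : ℕ => ∑' p : ℕ × ℕ × ℕ, qterm q p.1 p.2.1 p.2.2 l) ∧
    ∑' p : ℕ × ℕ × ℕ × ℕ, qterm q p.1 p.2.1 p.2.2.1 p.2.2.2 =
      ∑' l : ℕ, ∑' p : ℕ × ℕ × ℕ, qterm q p.1 p.2.1 p.2.2 l := by
  have hs' := reord.summable_iff.mpr (qterm_summable h0 h1)
  refine ⟨hs'.prod, ?_⟩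
  rw [← reord.tsum_eq]
  exact hs'.tsum_prod

lemma qsum_main {q : ℂ} (h0 : 0 < ‖q‖) (h1 : ‖q‖ < 1) :
    ∑' p : ℕ × ℕ × ℕ × ℕ, qterm q p.1 p.2.1 p.2.2.1 p.2.2.2
    = 2 * (J q 4)^3 * (J q 12)^2 / ((J q 2)^3 * J q 8 * J q 24)
      + 4 * q * J q 6 * J q 8 * J q 24 / ((J q 2)^2 * J q 12) := by
  have hq : q ≠ 0 := norm_pos_iff.mp h0
  obtain ⟨hl, key⟩ := qsum_key h0 h1
  rw [key]
  clear key
  obtain ⟨f, hf⟩ : ∃ f : ℕ → ℂ, f = fun l : ℕ => ∑' p : ℕ × ℕ × ℕ, qterm q p.1 p.2.1 p.2.2 l :=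
    ⟨_, rfl⟩
  have hfl : ∀ l, ∑' p : ℕ × ℕ × ℕ, qterm q p.1 p.2.1 p.2.2 l = f l := fun l => by rw [hf]
  rw [← hf] at hl
  simp only [hfl]
  have i1 : Function.Injective (fun m : ℕ => 2 * m) := fun a b h => by
    simp only at h; omega
  have i2 : Function.Injective (fun m : ℕ => 2 * m + 1) := fun a b h => by
    simp only at h; omega
  have e := tsum_even_add_odd (f := f) (hl.comp_injective i1) (hl.comp_injective i2)
  rw [← e]
  rw [← final_prod h1]
  obtain ⟨Y, hY⟩ : ∃ Y, Y = q^2 := ⟨_, rfl⟩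
  rw [← hY, ← slaterA hq h1 hY, ← slaterB hq h1 hY, ← tsum_mul_left, ← tsum_mul_left]
  congr 1
  · apply tsum_congr
    intro m
    rw [← hfl, qterm_inner hq h1 hY, term_even hq h1 hY]
  · apply tsum_congr
    intro m
    rw [← hfl, qterm_inner hq h1 hY, term_odd hq h1 hY]

theorem stmt_3 (q : ℂ) (h0 : 0 < ‖q‖) (h1 : ‖q‖ < 1) :
    (∑' p : ℕ × ℕ × ℕ × ℕ,
      (fun (i j k l : ℕ) =>
        q ^ ((2*(i:ℤ)^2 + 2*(j:ℤ)^2 + 2*(k:ℤ)^2 + 2*(l:ℤ)^2 - 2*(i:ℤ)*(l:ℤ) - 2*(j:ℤ)*(l:ℤ) - 2*(k:ℤ)*(l:ℤ) - 2*(k:ℤ) + (l:ℤ)) : ℤ) /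
          (qPoch (q ^ 4) (q ^ 4) i * qPoch (q ^ 4) (q ^ 4) j * qPoch (q ^ 4) (q ^ 4) k * qPoch (q ^ 4) (q ^ 4) l))
        p.1 p.2.1 p.2.2.1 p.2.2.2)
    = 2 * (J q 4)^3 * (J q 12)^2 / ((J q 2)^3 * J q 8 * J q 24)
      + 4 * q * J q 6 * J q 8 * J q 24 / ((J q 2)^2 * J q 12) := by
  exact qsum_main h0 h1
end

section
/- For every complex number q with 0 < |q| < 1, one has ∑_{i,j,k,l ≥ 0} q^{i²+j²+k²+l²−il−jl−kl−k} / ((q²;q²)_i (q²;q²)_j (q²;q²)_k (q²;q²)_l) = 8 J_2³ / J_1³. -/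
open scoped BigOperators

open Filter Topology

lemma qp_succ (a p : ℂ) (n : ℕ) : qPoch a p (n+1) = qPoch a p n * (1 - a * p^n) := by
  simp [qPoch, Finset.prod_range_succ]

lemma qp_zero (a p : ℂ) : qPoch a p 0 = 1 := by simp [qPoch]

lemma qp_succ' (a p : ℂ) (n : ℕ) : qPoch a p (n+1) = (1 - a) * qPoch (a*p) p n := by
  simp only [qPoch, Finset.prod_range_succ', pow_zero, mul_one]
  rw [mul_comm]
  congr 1
  apply Finset.prod_congr rfl
  intros; ring

lemma qp_add (a p : ℂ) (N n : ℕ) : qPoch a p (N+n) = qPoch a p N * qPoch (a*p^N) p n := by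
  induction n with
  | zero => simp [qp_zero]
  | succ n ih => rw [← add_assoc, qp_succ, qp_succ, ih]; ring

lemma qp_norm_summable (a p : ℂ) (hp : ‖p‖ < 1) : Summable fun n : ℕ => ‖-(a * p^n)‖ := by
  simp only [norm_neg, norm_mul, norm_pow]
  exact (summable_geometric_of_lt_one (norm_nonneg _) hp).mul_left _

lemma qp_mult (a p : ℂ) (hp : ‖p‖ < 1) : Multipliable fun n : ℕ => (1 - a * p^n) := by
  simpa [sub_eq_add_neg] using multipliable_one_add_of_summable (qp_norm_summable a p hp)

lemma qp_tendsto (a p : ℂ) (hp : ‖p‖ < 1) :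
    Tendsto (qPoch a p) atTop (𝓝 (qPochInf a p)) := (qp_mult a p hp).tendsto_prod_tprod_nat

lemma qpi_ne (a p : ℂ) (hp : ‖p‖ < 1) (h : ∀ n : ℕ, 1 - a * p^n ≠ 0) : qPochInf a p ≠ 0 := by
  unfold qPochInf
  have := tprod_one_add_ne_zero_of_summable (f := fun n : ℕ => -(a * p^n))
    (by simpa [sub_eq_add_neg] using h) (qp_norm_summable a p hp)
  simpa [sub_eq_add_neg] using this

lemma qp_ne (a p : ℂ) (h : ∀ n : ℕ, 1 - a * p^n ≠ 0) (n : ℕ) : qPoch a p n ≠ 0 :=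
  Finset.prod_ne_zero_iff.2 fun k _ => h k

lemma qpi_step (a p : ℂ) (hp : ‖p‖ < 1) : qPochInf a p = (1 - a) * qPochInf (a*p) p := by
  have h1 := (qp_tendsto a p hp).comp (tendsto_add_atTop_nat 1)
  have h2 := (qp_tendsto (a*p) p hp).const_mul (1-a)
  refine tendsto_nhds_unique h1 (h2.congr fun n => ?_)
  simp [qp_succ']

lemma qp_bdd (a p : ℂ) (hp : ‖p‖ < 1) : ∃ M : ℝ, ∀ n, ‖qPoch a p n‖ ≤ M := by
  obtain ⟨M, hM⟩ := (qp_tendsto a p hp).norm.bddAbove_range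
  exact ⟨M, fun n => hM ⟨n, rfl⟩⟩

lemma qp_inv_bdd (a p : ℂ) (hp : ‖p‖ < 1) (h : ∀ n : ℕ, 1 - a * p^n ≠ 0) :
    ∃ M : ℝ, ∀ n, ‖(qPoch a p n)⁻¹‖ ≤ M := by
  obtain ⟨M, hM⟩ := ((qp_tendsto a p hp).inv₀ (qpi_ne a p hp h)).norm.bddAbove_range
  exact ⟨M, fun n => hM ⟨n, rfl⟩⟩

lemma gauss_summable_s4 (x r : ℝ) (hx : 0 ≤ x) (hr : 0 < r) (hr1 : r < 1) :
    Summable fun m : ℕ => x^m * r^(m.choose 2) := by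
  have : Summable fun m : ℕ => (x+1)^m * r^(m.choose 2) := by
    refine summable_of_ratio_test_tendsto_lt_one (l := 0) one_pos
      (Eventually.of_forall fun n => by positivity) ?_
    have h := (tendsto_pow_atTop_nhds_zero_of_lt_one hr.le hr1).const_mul (x+1)
    rw [mul_zero] at h
    refine h.congr fun n => ?_
    rw [Real.norm_of_nonneg (by positivity), Real.norm_of_nonneg (by positivity),
      Nat.choose_succ_succ' n 1, pow_succ, pow_add, Nat.choose_one_right]
    field_simp
  refine this.of_nonneg_of_le (fun m => by positivity) fun m => ?_
  gcongr
  linarith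

/-- terms of the 1φ1 series -/
noncomputable def tt (a p z : ℂ) (m : ℕ) : ℂ :=
  qPoch a p m * (-z)^m * p^(m.choose 2) / (qPoch (a*z) p m * qPoch p p m)

lemma one_sub_pp_ne (p : ℂ) (hp : ‖p‖ < 1) (n : ℕ) : 1 - p * p^n ≠ 0 := by
  intro h
  have : ‖p^(n+1)‖ < 1 := by
    rw [norm_pow]; exact pow_lt_one₀ (norm_nonneg _) hp (by simp)
  rw [pow_succ', ← sub_eq_zero.1 h] at this
  simp at this

lemma tt_bound (a p z : ℂ) (hp0 : p ≠ 0) (hp : ‖p‖ < 1) (h : ∀ n : ℕ, 1 - a * z * p^n ≠ 0) :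
    ∃ K : ℝ, ∀ N m : ℕ, ‖tt a p (z*p^N) m‖ ≤ K * (‖z‖^m * ‖p‖^(m.choose 2)) := by
  obtain ⟨A, hA⟩ := qp_bdd a p hp
  obtain ⟨B, hB⟩ := qp_inv_bdd (a*z) p hp h
  obtain ⟨C, hC⟩ := qp_inv_bdd p p hp (one_sub_pp_ne p hp)
  obtain ⟨D, hD⟩ := qp_bdd (a*z) p hp
  have hA0 := (norm_nonneg _).trans (hA 0)
  have hB0 := (norm_nonneg _).trans (hB 0)
  have hC0 := (norm_nonneg _).trans (hC 0)
  have hD0 := (norm_nonneg _).trans (hD 0)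
  refine ⟨A * (D * B) * C, fun N m => ?_⟩
  have e : tt a p (z*p^N) m = qPoch a p m * (qPoch (a*z) p N * (qPoch (a*z) p (N+m))⁻¹)
      * (qPoch p p m)⁻¹ * ((-z)^m * p^(m.choose 2)) * (p^N)^m := by
    have h1 := qp_ne _ _ h N
    have h2 := qp_ne _ _ h (N+m)
    rw [tt, qp_add]
    rw [qp_add] at h2
    have h3 := right_ne_zero_of_mul h2
    rw [← mul_assoc a z, neg_mul_eq_neg_mul, mul_pow]
    generalize qPoch (a*z*p^N) p m = X at *
    generalize qPoch (a*z) p N = Y at *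
    field_simp
  rw [e]
  simp only [norm_mul, norm_pow, norm_neg]
  have h5 : (‖p‖^N)^m ≤ 1 := pow_le_one₀ (by positivity) (pow_le_one₀ (by positivity) hp.le)
  calc _ ≤ A * (D * B) * C * (‖z‖^m * ‖p‖^(m.choose 2)) * 1 := by
        gcongr
        · exact hA m
        · exact hD N
        · exact hB _
        · exact hC m
    _ = _ := by ring

lemma tt_summable (a p z : ℂ) (hp0 : p ≠ 0) (hp : ‖p‖ < 1) (h : ∀ n : ℕ, 1 - a * z * p^n ≠ 0) :
    Summable fun m => ‖tt a p z m‖ := by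
  obtain ⟨K, hK⟩ := tt_bound a p z hp0 hp h
  refine Summable.of_nonneg_of_le (fun _ => norm_nonneg _) (fun m => by simpa using hK 0 m)
    ((gauss_summable_s4 ‖z‖ ‖p‖ (norm_nonneg _) (norm_pos_iff.2 hp0) hp).mul_left K)

lemma shift_ne {a p z : ℂ} (h : ∀ n : ℕ, 1 - a * z * p^n ≠ 0) (N : ℕ) :
    ∀ n : ℕ, 1 - a * (z*p^N) * p^n ≠ 0 := by
  intro n
  have := h (N+n)
  rwa [pow_add, ← mul_assoc, mul_assoc a z] at this

lemma tt_rec (a p z : ℂ) (hp0 : p ≠ 0) (hp : ‖p‖ < 1) (h : ∀ n : ℕ, 1 - a * z * p^n ≠ 0) :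
    (1 - a*z) * ∑' m, tt a p z m = (1 - z) * ∑' m, tt a p (z*p) m := by
  have s1 : Summable (tt a p z) := (tt_summable a p z hp0 hp h).of_norm
  have s2 : Summable (tt a p (z*p)) :=
    (tt_summable a p (z*p) hp0 hp (by simpa using shift_ne h 1)).of_norm
  obtain ⟨u, hu⟩ : ∃ u : ℕ → ℂ, u = fun m => -((1 - a*z) * (tt a p z m * (1 - p^m))) := ⟨_, rfl⟩
  have su : Summable u := by
    rw [hu]
    have s3 : Summable fun m => tt a p z m * (1 - p^m) := by
      refine Summable.of_norm_bounded (g := fun m => ‖tt a p z m‖ * 2)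
        ((tt_summable a p z hp0 hp h).mul_right 2) fun m => ?_
      rw [norm_mul]
      gcongr
      calc ‖1 - p^m‖ ≤ ‖(1:ℂ)‖ + ‖p^m‖ := norm_sub_le _ _
        _ ≤ 1 + 1 := by
          rw [norm_one, norm_pow]; gcongr; exact pow_le_one₀ (norm_nonneg _) hp.le
        _ = 2 := by norm_num
    exact (s3.mul_left (1 - a*z)).neg
  have key : ∀ m, (1 - a*z) * tt a p z m - (1-z) * tt a p (z*p) m = u (m+1) - u m := by
    intro m
    have h0 := h m
    have h00 : 1 - a * z ≠ 0 := by simpa using h 0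
    have h1 := qp_ne _ _ h m
    have h2 := qp_ne _ _ (one_sub_pp_ne p hp) m
    have h3 := one_sub_pp_ne p hp m
    have h4 : qPoch (a*(z*p)) p m = qPoch (a*z) p m * (1 - a*z*p^m) / (1 - a*z) := by
      rw [← qp_succ, qp_succ', mul_assoc]; field_simp
    simp only [hu, tt, h4, qp_succ, Nat.choose_succ_succ' m 1, Nat.choose_one_right, pow_add,
      pow_one, pow_succ (-z), neg_mul_eq_neg_mul, mul_pow]
    have h3' : 1 - p^m * p ≠ 0 := by rwa [mul_comm]
    generalize qPoch (a*z) p m = X at *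
    generalize qPoch p p m = Y at *
    generalize qPoch a p m = Z at *
    generalize p^m = P at *
    generalize p^(m.choose 2) = P2 at *
    generalize (-z)^m = Q at *
    field_simp
    ring
  have t0 := su.tsum_eq_zero_add
  have u0 : u 0 = 0 := by simp [hu]
  have t1 : ∑' m, (u (m+1) - u m) = 0 := by
    rw [Summable.tsum_sub ((summable_nat_add_iff 1).2 su) su, t0, u0]; ring
  simp_rw [← key] at t1
  rw [Summable.tsum_sub (s1.mul_left _) (s2.mul_left _), tsum_mul_left, tsum_mul_left] at t1
  exact sub_eq_zero.1 t1

lemma phi11_s4 (a p z : ℂ) (hp0 : p ≠ 0) (hp : ‖p‖ < 1) (h : ∀ n : ℕ, 1 - a * z * p^n ≠ 0) :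
    HasSum (tt a p z) (qPochInf z p / qPochInf (a*z) p) := by
  have s1 : Summable (tt a p z) := (tt_summable a p z hp0 hp h).of_norm
  have it : ∀ N : ℕ, qPoch (a*z) p N * ∑' m, tt a p z m
      = qPoch z p N * ∑' m, tt a p (z*p^N) m := by
    intro N
    induction N with
    | zero => simp [qp_zero]
    | succ N ih =>
      have := tt_rec a p (z*p^N) hp0 hp (shift_ne h N)
      rw [qp_succ, qp_succ, pow_succ, ← mul_assoc z]
      linear_combination (1 - a*z*p^N) * ih + qPoch z p N * this
  obtain ⟨K, hK⟩ := tt_bound a p z hp0 hp h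
  have lim : Tendsto (fun N : ℕ => ∑' m, tt a p (z*p^N) m) atTop
      (𝓝 (∑' m : ℕ, if m = 0 then (1:ℂ) else 0)) := by
    refine tendsto_tsum_of_dominated_convergence
      ((gauss_summable_s4 ‖z‖ ‖p‖ (norm_nonneg _) (norm_pos_iff.2 hp0) hp).mul_left K) ?_
      (Eventually.of_forall fun N m => hK N m)
    intro m
    have hz : Tendsto (fun N : ℕ => z*p^N) atTop (𝓝 0) := by
      simpa using (tendsto_pow_atTop_nhds_zero_of_norm_lt_one hp).const_mul z
    have hc : ContinuousAt (fun z => tt a p z m) 0 := by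
      unfold tt qPoch
      refine ContinuousAt.div (by fun_prop) (by fun_prop) ?_
      have := qp_ne _ _ (one_sub_pp_ne p hp) m
      simpa [qPoch] using this
    have := hc.tendsto.comp hz
    have e0 : tt a p 0 m = if m = 0 then (1:ℂ) else 0 := by
      rcases m with _ | m
      · simp [tt, qp_zero]
      · simp [tt]
    rw [e0] at this
    exact this
  rw [tsum_ite_eq] at lim
  have e := tendsto_nhds_unique ((qp_tendsto (a*z) p hp).mul_const (∑' m, tt a p z m))
    (((qp_tendsto z p hp).mul lim).congr fun N => (it N).symm)
  have hne := qpi_ne _ _ hp h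
  have : ∑' m, tt a p z m = qPochInf z p / qPochInf (a*z) p := by
    rw [eq_div_iff hne]; linear_combination e
  rw [← this]; exact s1.hasSum

lemma choose_pow (q : ℂ) (m : ℕ) : (q^2)^(m.choose 2) * q^m = q^(m^2) := by
  induction m with
  | zero => simp
  | succ m ih =>
    rw [Nat.choose_succ_succ' m 1, Nat.choose_one_right, one_add_one_eq_two,
      show (m+1)^2 = m^2 + (2*m + 1) by ring, pow_add q (m^2), ← ih, pow_add (q^2)]
    ring

noncomputable def EE (q : ℂ) (s : ℤ) : ℂ := qPochInf (-(q^s)) (q^2)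

noncomputable def ti (q : ℂ) (s : ℤ) (i : ℕ) : ℂ := q^((i:ℤ)^2 - i*s) / qPoch (q^2) (q^2) i

section
variable {q : ℂ} (hq : q ≠ 0) (h1 : ‖q‖ < 1)

lemma sq_lt (h1 : ‖q‖ < 1) : ‖q^2‖ < 1 := by
  rw [norm_pow]; exact pow_lt_one₀ (norm_nonneg _) h1 (by simp)

lemma qpow_ne (h1 : ‖q‖ < 1) (n : ℕ) : 1 - q^(n+1) ≠ 0 := by
  rw [pow_succ']; exact one_sub_pp_ne q h1 n

lemma ti_eq (hq : q ≠ 0) (s : ℤ) (i : ℕ) : ti q s i = tt 0 (q^2) (-(q^(1-s))) i := by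
  have h0 : ∀ n, qPoch 0 (q^2) n = 1 := fun n => by simp [qPoch]
  rw [ti, tt, zero_mul, h0, neg_neg, one_mul, one_mul]
  congr 1
  have := choose_pow q i
  have hqi : q^i ≠ 0 := pow_ne_zero _ hq
  have e : (q^2)^(i.choose 2) = q^((i:ℤ)^2) / q^i := by
    rw [eq_div_iff hqi, this]; exact_mod_cast rfl
  rw [e, ← zpow_natCast (q^(1-s)), ← zpow_mul, ← zpow_natCast q i, ← zpow_sub₀ hq, ← zpow_add₀ hq]
  congr 1; ring

lemma ti_sum (hq : q ≠ 0) (h1 : ‖q‖ < 1) (s : ℤ) : HasSum (ti q s) (EE q (1-s)) := by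
  have := phi11_s4 0 (q^2) (-(q^(1-s))) (pow_ne_zero _ hq) (sq_lt h1) (by simp)
  have e0 : qPochInf 0 (q^2) = 1 := by simp [qPochInf]
  rw [zero_mul, e0, div_one] at this
  rw [show ti q s = _ from funext (ti_eq hq s)]
  exact this

lemma ti_norm (hq : q ≠ 0) (h1 : ‖q‖ < 1) (s : ℤ) : Summable fun i => ‖ti q s i‖ := by
  rw [show ti q s = _ from funext (ti_eq hq s)]
  exact tt_summable 0 (q^2) (-(q^(1-s))) (pow_ne_zero _ hq) (sq_lt h1) (by simp)

lemma EE_step (hq : q ≠ 0) (h1 : ‖q‖ < 1) (s : ℤ) : EE q s = (1 + q^s) * EE q (s+2) := by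
  rw [EE, qpi_step _ _ (sq_lt h1), EE, sub_neg_eq_add, zpow_add₀ hq, neg_mul]
  norm_cast

lemma EE_odd (hq : q ≠ 0) (h1 : ‖q‖ < 1) (m : ℕ) :
    EE q (1 - 2*m) * q^(m^2) = EE q 1 * qPoch (-q) (q^2) m := by
  induction m with
  | zero => simp [qp_zero]
  | succ m ih =>
    have e := EE_step hq h1 (1 - 2*((m+1:ℕ):ℤ))
    rw [show (1:ℤ) - 2*((m+1:ℕ):ℤ) + 2 = 1 - 2*m by push_cast; ring] at e
    rw [e, qp_succ, ← mul_assoc, ← ih]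
    have e2 : q^((1:ℤ) - 2*((m+1:ℕ):ℤ)) * q^(2*m+1) = 1 := by
      rw [← zpow_natCast q (2*m+1), ← zpow_add₀ hq]
      convert zpow_zero q using 2; push_cast; ring
    rw [show (m+1)^2 = m^2 + (2*m+1) by ring, pow_add]
    rw [← pow_mul]
    generalize q^((1:ℤ) - 2*((m+1:ℕ):ℤ)) = Z at *
    linear_combination (EE q (1-2*m)) * q^(m^2) * e2

lemma EE_even (hq : q ≠ 0) (h1 : ‖q‖ < 1) (m : ℕ) :
    EE q (- 2*m) * (q^(m^2) * q^m) = 2 * EE q 2 * qPoch (-q^2) (q^2) m := by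
  induction m with
  | zero => 
    have := EE_step hq h1 0
    simp [qp_zero] at this ⊢
    rw [this]; norm_num
  | succ m ih =>
    have e := EE_step hq h1 (- 2*((m+1:ℕ):ℤ))
    rw [show - 2*((m+1:ℕ):ℤ) + 2 = - 2*m by push_cast; ring] at e
    rw [e, qp_succ, ← mul_assoc (2 * EE q 2), ← ih]
    have e2 : q^(- 2*((m+1:ℕ):ℤ)) * q^(2*m+2) = 1 := by
      rw [← zpow_natCast q (2*m+2), ← zpow_add₀ hq]
      convert zpow_zero q using 2; push_cast; ring
    rw [show (m+1)^2 = m^2 + (2*m+1) by ring, pow_add]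
    rw [← pow_mul]
    generalize q^(- 2*((m+1:ℕ):ℤ)) = Z at *
    linear_combination (EE q (-2*m)) * q^(m^2) * q^m * e2

lemma qp_2m (q : ℂ) (m : ℕ) : qPoch (q^2) (q^2) (2*m) =
    qPoch q (q^2) m * qPoch (-q) (q^2) m * qPoch (q^2) (q^2) m * qPoch (-q^2) (q^2) m := by
  induction m with
  | zero => simp [qp_zero]
  | succ m ih =>
    rw [show 2*(m+1) = 2*m+1+1 by ring]
    simp only [qp_succ]
    rw [ih]
    ring

lemma qp_2m1 (q : ℂ) (m : ℕ) : qPoch (q^2) (q^2) (2*m+1) =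
    qPoch q (q^2) (m+1) * qPoch (-q) (q^2) (m+1) * qPoch (q^2) (q^2) m * qPoch (-q^2) (q^2) m := by
  simp only [qp_succ]
  rw [qp_2m]
  ring

noncomputable def gg (q : ℂ) (l : ℕ) : ℂ :=
  q^(l^2) / qPoch (q^2) (q^2) l * (EE q (1-l) * (EE q (1-l) * EE q (-l)))

lemma one_add_ne (h1 : ‖q‖ < 1) (n : ℕ) : 1 + q^(n+1) ≠ 0 := by
  have := qpow_ne h1 (2*n+1)
  rw [show 2*n+1+1 = (n+1)*2 by ring, pow_mul, show 1 - (q^(n+1))^2 = (1-q^(n+1))*(1+q^(n+1)) by ring] at this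
  exact right_ne_zero_of_mul this

lemma nA (h1 : ‖q‖ < 1) : ∀ m, qPoch q (q^2) m ≠ 0 :=
  qp_ne _ _ fun n => by have := qpow_ne h1 (2*n); rwa [pow_succ', pow_mul] at this
lemma nB (h1 : ‖q‖ < 1) : ∀ m, qPoch (-q) (q^2) m ≠ 0 :=
  qp_ne _ _ fun n => by
    have := one_add_ne h1 (2*n); rwa [pow_succ', pow_mul, ← sub_neg_eq_add, neg_mul_eq_neg_mul] at this
lemma nC (h1 : ‖q‖ < 1) : ∀ m, qPoch (q^2) (q^2) m ≠ 0 :=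
  qp_ne _ _ (one_sub_pp_ne _ (sq_lt h1))
lemma nD (h1 : ‖q‖ < 1) : ∀ m, qPoch (-q^2) (q^2) m ≠ 0 :=
  qp_ne _ _ fun n => by
    have := one_add_ne (sq_lt h1) n; rwa [pow_succ', ← sub_neg_eq_add, neg_mul_eq_neg_mul] at this

lemma gg_even (hq : q ≠ 0) (h1 : ‖q‖ < 1) (m : ℕ) :
    gg q (2*m) = 2 * EE q 1^2 * EE q 2 * tt (-q) (q^2) (-1) m := by
  have a1 := EE_odd hq h1 m
  have a2 := EE_even hq h1 m
  have a3 := choose_pow q m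
  have hQ : q^m ≠ 0 := pow_ne_zero _ hq
  have hX : q^(m^2) ≠ 0 := pow_ne_zero _ hq
  have hA := nA h1 m
  have hB := nB h1 m
  have hC := nC h1 m
  have hD := nD h1 m
  rw [gg, tt, qp_2m, show (2*m)^2 = m^2*4 by ring, pow_mul]
  rw [← eq_div_iff hX] at a1
  rw [← eq_div_iff (mul_ne_zero hX hQ)] at a2
  rw [← eq_div_iff hQ] at a3
  rw [show (1:ℤ) - (2*m:ℕ) = 1 - 2*m by push_cast; ring, show -((2*m:ℕ):ℤ) = -2*m by push_cast; ring,
    a1, a2, a3]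
  simp only [neg_neg, one_pow, mul_one, mul_neg]
  field_simp

lemma gg_odd (hq : q ≠ 0) (h1 : ‖q‖ < 1) (m : ℕ) :
    gg q (2*m+1) = 4 * EE q 1 * EE q 2^2 / (1-q) * tt (-q^2) (q^2) (-q) m := by
  have a1 := EE_odd hq h1 (m+1)
  have a2 := EE_even hq h1 m
  have a3 := choose_pow q m
  have hQ : q^m ≠ 0 := pow_ne_zero _ hq
  have hX : q^(m^2) ≠ 0 := pow_ne_zero _ hq
  have hX' : q^((m+1)^2) ≠ 0 := pow_ne_zero _ hq
  have hA := nA h1 (m+1)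
  have hB := nB h1 (m+1)
  have hC := nC h1 m
  have hD := nD h1 m
  have hq1 : 1 - q ≠ 0 := by simpa using qpow_ne h1 0
  rw [gg, tt, qp_2m1, show (2*m+1)^2 = m^2*4+(m*4+1) by ring, pow_add, pow_add, pow_mul, pow_mul, pow_one]
  rw [qp_succ'] at hA ⊢
  rw [← eq_div_iff hX'] at a1
  rw [← eq_div_iff (mul_ne_zero hX hQ)] at a2
  rw [← eq_div_iff hQ] at a3
  have hA' := right_ne_zero_of_mul hA
  rw [show (1:ℤ) - (2*m+1:ℕ) = -2*m by push_cast; ring,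
    show -((2*m+1:ℕ):ℤ) = 1 - 2*(m+1:ℕ) by push_cast; ring,
    a1, a2, a3, show (m+1)^2 = m^2 + (m*2+1) by ring, pow_add q, pow_add q, pow_mul, pow_one, neg_neg,
    show -q^2 * -q = q * q^2 by ring]
  generalize qPoch (q * q^2) (q^2) m = A at *
  generalize qPoch (-q) (q^2) (m+1) = B at *
  generalize qPoch (q^2) (q^2) m = C at *
  generalize qPoch (-q^2) (q^2) m = D at *
  generalize q^m = Q at *
  generalize q^(m^2) = X at *
  field_simp
  try ring

lemma even_odd (a : ℂ) (h1 : ‖q‖ < 1) :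
    qPochInf a q = qPochInf a (q^2) * qPochInf (a*q) (q^2) := by
  have hE := (qp_mult a (q^2) (sq_lt h1)).hasProd
  have hO := (qp_mult (a*q) (q^2) (sq_lt h1)).hasProd
  refine (HasProd.even_mul_odd (f := fun n => 1 - a * q^n) (hE.congr_fun ?_) (hO.congr_fun ?_)).tprod_eq
  · intro n; rw [pow_mul]
  · intro n; rw [pow_succ', pow_mul]; ring

lemma J_one (h1 : ‖q‖ < 1) : J q 1 = qPochInf q (q^2) * J q 2 := by
  rw [J, J, pow_one, even_odd q h1, ← sq]

lemma J_two (h1 : ‖q‖ < 1) : J q 1 * (EE q 1 * EE q 2) = J q 2 := by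
  have e : EE q 1 * EE q 2 = qPochInf (-q) q := by
    rw [even_odd _ h1, EE, EE, zpow_one, neg_mul, ← sq]; norm_cast
  rw [e, J, J, pow_one]
  refine tendsto_nhds_unique ((qp_tendsto _ _ h1).mul (qp_tendsto _ _ h1))
    ((qp_tendsto _ _ (sq_lt h1)).congr fun n => ?_)
  rw [qPoch, qPoch, qPoch, ← Finset.prod_mul_distrib]
  refine Finset.prod_congr rfl fun k _ => by ring

lemma gg_sum (hq : q ≠ 0) (h1 : ‖q‖ < 1) : HasSum (gg q) (8 * (J q 2)^3 / (J q 1)^3) := by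
  have nq : ∀ n : ℕ, 1 - q * (q^2)^n ≠ 0 := fun n => by
    have := qpow_ne h1 (2*n); rwa [pow_succ', pow_mul] at this
  have hJ2 : J q 2 ≠ 0 := qpi_ne _ _ (sq_lt h1) (one_sub_pp_ne _ (sq_lt h1))
  have hP : qPochInf q (q^2) ≠ 0 := qpi_ne _ _ (sq_lt h1) nq
  have hq1 : 1 - q ≠ 0 := by simpa using qpow_ne h1 0
  have p1 := phi11_s4 (-q) (q^2) (-1) (pow_ne_zero _ hq) (sq_lt h1) (by simpa using nq)
  have p2 := phi11_s4 (-q^2) (q^2) (-q) (pow_ne_zero _ hq) (sq_lt h1) (fun n => by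
    have := qpow_ne h1 (2*n+2)
    rwa [show q^(2*n+2+1) = -q^2 * -q * (q^2)^n by rw [← pow_mul]; ring] at this)
  have s1 := (p1.mul_left (2 * EE q 1^2 * EE q 2))
  have s2 := (p2.mul_left (4 * EE q 1 * EE q 2^2 / (1-q)))
  simp only [← gg_even hq h1] at s1
  simp only [← gg_odd hq h1] at s2
  have e1 : qPochInf (-1) (q^2) = 2 * EE q 2 := by
    have := EE_step hq h1 0
    simp [EE] at this ⊢
    rw [this]; norm_num
  have e2 : qPochInf (-q) (q^2) = EE q 1 := by simp [EE]
  have e3 : qPochInf (-q^2 * -q) (q^2) = qPochInf q (q^2) / (1-q) := by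
    rw [qpi_step q _ (sq_lt h1), show -q^2 * -q = q * q^2 by ring]; field_simp
  have hs := s1.even_add_odd s2
  refine (congrArg (HasSum (gg q)) ?_).mpr hs
  rw [e1, e2, e3, show -q * -1 = q by ring]
  have j1 := J_one h1
  have j2 := J_two h1
  rw [j1] at j2 ⊢
  have j3 : qPochInf q (q^2) * (EE q 1 * EE q 2) = 1 :=
    mul_right_cancel₀ hJ2 (by linear_combination j2)
  have j4 : EE q 1 * EE q 2 = 1 / qPochInf q (q^2) := by
    rw [eq_div_iff hP]; linear_combination j3
  have : (2 * EE q 1^2 * EE q 2 * (2 * EE q 2 / qPochInf q (q^2)) +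
      4 * EE q 1 * EE q 2^2 / (1-q) * (EE q 1 / (qPochInf q (q^2) / (1-q))))
      = 8 * (EE q 1 * EE q 2)^2 / qPochInf q (q^2) := by
    field_simp; ring
  rw [this, j4]
  field_simp

end

lemma quad_bound (i j k l : ℤ) :
    i + j + k + l - 11 ≤ i^2 + j^2 + k^2 + l^2 - i*l - j*l - k*l - k := by
  nlinarith [sq_nonneg (2*i - l - 1), sq_nonneg (2*j - l - 1), sq_nonneg (2*k - l - 2),
    sq_nonneg (l - 6)]

lemma four_summable (r : ℝ) (h0 : 0 < r) (h1 : r < 1) :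
    Summable fun p : ℕ × ℕ × ℕ × ℕ => r^p.1 * (r^p.2.1 * (r^p.2.2.1 * r^p.2.2.2)) := by
  have g := summable_geometric_of_lt_one h0.le h1
  have g0 : (0 : ℕ → ℝ) ≤ fun n => r^n := fun n => by positivity
  have g2 := g.mul_of_nonneg g g0 g0
  have g3 := g.mul_of_nonneg g2 g0 (fun n => by positivity)
  exact g.mul_of_nonneg g3 g0 (fun n => by positivity)

def eqv : ℕ × ℕ × ℕ × ℕ ≃ ℕ × ℕ × ℕ × ℕ where
  toFun p := (p.2.1, p.2.2.1, p.2.2.2, p.1)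
  invFun p := (p.2.2.2, p.1, p.2.1, p.2.2.1)
  left_inv _ := rfl
  right_inv _ := rfl

lemma t1 {R : Type*} [NormedCommRing R] (f g : ℕ → R) 
    (nf : Summable fun n => ‖f n‖) (ng : Summable fun n => ‖g n‖) :  Summable fun x : ℕ × ℕ => ‖f x.1 * g x.2‖ := nf.mul_norm ng
lemma t2 {R : Type*} [NormedCommRing R] [CompleteSpace R] (f : ℕ → R) (g : ℕ × ℕ → R) 
    (nf : Summable fun n => ‖f n‖) (ng : Summable fun n => ‖g n‖) :  Summable fun x : ℕ × ℕ × ℕ => f x.1 * g x.2 := by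
  exact summable_mul_of_summable_norm nf ng
lemma t3 {R : Type*} [NormedCommRing R] [CompleteSpace R] (f : ℕ → R) (g : ℕ × ℕ → R) (a b : R)
  (hf : HasSum f a) (hg : HasSum g b)
    (nf : Summable fun n => ‖f n‖) (ng : Summable fun n => ‖g n‖) : HasSum (fun x : ℕ × ℕ × ℕ => f x.1 * g x.2) (a*b) := by
  exact hf.mul hg (t2 f g nf ng)
lemma t3' {R : Type*} [NormedCommRing R] [CompleteSpace R] (f : ℕ → R) (g : ℕ → R) (a b : R)
  (hf : HasSum f a) (hg : HasSum g b)
    (nf : Summable fun n => ‖f n‖) (ng : Summable fun n => ‖g n‖) : HasSum (fun x : ℕ × ℕ => f x.1 * g x.2) (a*b) := by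
  exact hf.mul hg (t1 f g nf ng).of_norm
lemma triple {R : Type*} [NormedCommRing R] [CompleteSpace R] (f g : ℕ → R) (a b : R) (hf : HasSum f a) (hg : HasSum g b)
    (nf : Summable fun n => ‖f n‖) (ng : Summable fun n => ‖g n‖) :
    HasSum (fun x : ℕ × ℕ × ℕ => f x.1 * (f x.2.1 * g x.2.2)) (a * (a * b)) := by
  have h2 := t3' f g a b hf hg nf ng
  have n2 := t1 f g nf ng
  generalize hG : (fun y : ℕ × ℕ => f y.1 * g y.2) = G at h2
  have hG2 : ∀ y : ℕ × ℕ, f y.1 * g y.2 = G y := fun y => by rw [← hG]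
  simp only [hG2] at n2 ⊢
  exact t3 f G a (a*b) hf h2 nf n2

theorem stmt_4 (q : ℂ) (h0 : 0 < ‖q‖) (h1 : ‖q‖ < 1) :
    (∑' p : ℕ × ℕ × ℕ × ℕ,
      (fun (i j k l : ℕ) =>
        q ^ (((i:ℤ)^2 + (j:ℤ)^2 + (k:ℤ)^2 + (l:ℤ)^2 - (i:ℤ)*(l:ℤ) - (j:ℤ)*(l:ℤ) - (k:ℤ)*(l:ℤ) - (k:ℤ)) : ℤ) /
          (qPoch (q ^ 2) (q ^ 2) i * qPoch (q ^ 2) (q ^ 2) j * qPoch (q ^ 2) (q ^ 2) k * qPoch (q ^ 2) (q ^ 2) l))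
        p.1 p.2.1 p.2.2.1 p.2.2.2)
    = 8 * (J q 2)^3 / (J q 1)^3 := by
  have hq : q ≠ 0 := norm_pos_iff.1 h0
  obtain ⟨M, hM⟩ := qp_inv_bdd (q^2) (q^2) (sq_lt h1) (one_sub_pp_ne _ (sq_lt h1))
  have hM0 := (norm_nonneg _).trans (hM 0)
  generalize hF : (fun p : ℕ × ℕ × ℕ × ℕ =>
      (fun (i j k l : ℕ) =>
        q ^ (((i:ℤ)^2 + (j:ℤ)^2 + (k:ℤ)^2 + (l:ℤ)^2 - (i:ℤ)*(l:ℤ) - (j:ℤ)*(l:ℤ) - (k:ℤ)*(l:ℤ) - (k:ℤ)) : ℤ) /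
          (qPoch (q ^ 2) (q ^ 2) i * qPoch (q ^ 2) (q ^ 2) j * qPoch (q ^ 2) (q ^ 2) k * qPoch (q ^ 2) (q ^ 2) l))
        p.1 p.2.1 p.2.2.1 p.2.2.2) = F
  have hS : Summable F := by
    refine Summable.of_norm_bounded
      ((four_summable ‖q‖ h0 h1).mul_left (M * M * M * M * ‖q‖^(-11:ℤ))) fun p => ?_
    obtain ⟨i, j, k, l⟩ := p
    rw [← hF]
    simp only [div_eq_mul_inv, mul_inv, norm_mul, norm_zpow]
    have b : ‖q‖ ^ (((i:ℤ)^2 + (j:ℤ)^2 + (k:ℤ)^2 + (l:ℤ)^2 - (i:ℤ)*(l:ℤ) - (j:ℤ)*(l:ℤ) - (k:ℤ)*(l:ℤ) - (k:ℤ)) : ℤ)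
        ≤ ‖q‖^((i:ℤ)+j+k+l-11) :=
      zpow_le_zpow_right_of_le_one₀ h0 h1.le (quad_bound i j k l)
    have b2 : ‖q‖^((i:ℤ)+j+k+l-11) = ‖q‖^(-11:ℤ) * (‖q‖^i * (‖q‖^j * (‖q‖^k * ‖q‖^l))) := by
      rw [sub_eq_add_neg]
      simp only [zpow_add₀ h0.ne', zpow_natCast]
      ring
    rw [b2] at b
    calc _ ≤ ‖q‖^(-11:ℤ) * (‖q‖^i * (‖q‖^j * (‖q‖^k * ‖q‖^l))) * (M * M * M * M) := by
          gcongr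
          · exact hM i
          · exact hM j
          · exact hM k
          · exact hM l
      _ = _ := by ring
  have hT : HasSum (F ∘ eqv) (∑' p, F p) := (Equiv.hasSum_iff eqv).2 hS.hasSum
  have hG : HasSum (gg q) (∑' p, F p) := by
    refine hT.prod_fiberwise fun l => ?_
    have sA := ti_sum hq h1 l
    have sB := ti_sum hq h1 (l+1)
    have nA := ti_norm hq h1 l
    have nB := ti_norm hq h1 (l+1)
    have m3 := triple _ _ _ _ sA sB nA nB
    have m4 := m3.mul_left (q^(l^2) / qPoch (q^2) (q^2) l)
    rw [show (1:ℤ) - (l+1) = -l by ring] at m4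
    refine m4.congr_fun ?_
    rintro ⟨i, j, k⟩
    simp only [Function.comp, ← hF, eqv, Equiv.coe_fn_mk, ti]
    have e : q ^ (((i:ℤ)^2 + (j:ℤ)^2 + (k:ℤ)^2 + (l:ℤ)^2 - (i:ℤ)*(l:ℤ) - (j:ℤ)*(l:ℤ) - (k:ℤ)*(l:ℤ) - (k:ℤ)) : ℤ)
        = q^(l^2) * (q^((i:ℤ)^2 - i*l) * (q^((j:ℤ)^2 - j*l) * q^((k:ℤ)^2 - k*(l+1)))) := by
      rw [← zpow_natCast q (l^2)]
      simp only [← zpow_add₀ hq]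
      congr 1; push_cast; ring
    rw [e]
    simp only [div_eq_mul_inv, mul_inv]
    ring
  exact hG.unique (gg_sum hq h1)
end
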